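/- (Dyson's rank conjecture modulo 5, proved by Atkin and Swinnerton-Dyer) For every natural number k and every integer m with 0 ≤ m ≤ 4, the number of partitions of 5k + 4 whose rank is congruent to m modulo 5 equals p(5k + 4)/5, i.e. N(0, 5, 5k+4) = N(1, 5, 5k+4) = N(2, 5, 5k+4) = N(3, 5, 5k+4) = N(4, 5, 5k+4). -/

import Mathlib

/-!
The proof compares generating functions, for `q` in a punctured disc around `0`.

*Ranks.* Removing the first column of a partition and putting a longer first row on top of the rest
(Dyson's adjoint, `Ptn.adjoint_ge`, `Ptn.adjoint_le`) gives a recursion for the generating function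
of the partitions of rank at least `m`, and one for those of rank at most `-m`. Solving it yields, for
`m ≥ 1`, the same function `PP q * ∑ (-1)^(n-1) q^(n(3n-1)/2 + mn)`, summed over `n ≥ 1`, in both cases
(`av_eq`, `bv_eq`). The recursion for `m = 0` gives Euler's pentagonal number theorem
`PP q * EE q = 1`. Adding up the ranks in a class modulo `5` expresses the generating function `Nc q c`
of the class of `c` by Lambert-type series (`Nc_eq`, `Nc_zero`). It follows that
`Nc q 1 = Nc q 4`, `Nc q 2 = Nc q 3`, and

* `Nc q 1 - Nc q 2 = PP q * (2 * GG 1 q + GG 4 q)`,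
* `Nc q 0 - Nc q 2 = PP q * (1 + GG 1 q - 2 * GG 4 q)`.

*Dissections.* It remains to see that the right-hand sides have no terms `q ^ (5 * k + 4)`. With
`y = q ^ 5` and `Q = y ^ 5`, splitting the summation index of `GG b` modulo `5` writes it as a
combination of the Lerch-type series `LL Q (y ^ r) _`. These satisfy a three-term relation
(`lerch_three_term`): after multiplication by theta functions, the combination in question is
holomorphic on `ℂ*` and invariant under `z ↦ Q z`, hence constant (`elliptic_const`). The relation
and its degenerate case (`lerch_three_term_deg`) reduce `GG 1` and `GG 4` to the series `LL Q (y ^ 2) 1`,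
`LL Q y 1`, logarithmic derivatives of theta functions, and theta quotients. The logarithmic
derivatives occur in combinations that are theta quotients by the addition formula for theta
functions (`th_mul_th`, `DD_triple`). The `5`-dissection of Euler's product (`EE_dissection`) shows
that the result is `EE q` times a sum of functions `q ^ i * f (q ^ 5)` in which `i = 4` does not occur
(`two_GG_one_add`, `GG_one_sub`). Since `PP q` is the inverse of `EE q`, the differences of the
`Nc q c` are such sums, and averaging over the fifth roots of unity annihilates their coefficients at
`5 * k + 4` (`coeff_eq_zero_of_dissection`). The five rank counts are therefore equal, and they add up
to the number of partitions of `5 * k + 4`.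
-/

/-- `p n` is the number of partitions of `n`. -/
def partitionCount (n : ℕ) : ℕ := Fintype.card (Nat.Partition n)

/-- The rank of a partition: its largest part minus the number of its parts. -/
def Nat.Partition.rank {n : ℕ} (π : n.Partition) : ℤ :=
  (π.parts.sup : ℤ) - (π.parts.card : ℤ)

/-- `N m k`: the number of partitions of `k` with rank `m`. -/
def rankCount (m : ℤ) (k : ℕ) : ℕ :=
  Fintype.card {π : k.Partition // π.rank = m}

/-- `N m q k`: the number of partitions of `k` whose rank is congruent to `m` mod `q`. -/
def rankCountMod (m : ℤ) (q : ℕ) (k : ℕ) : ℕ :=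
  Fintype.card {π : k.Partition // π.rank ≡ m [ZMOD q]}

open Filter Topology

/-! ### Theta series on `ℂ*` and Liouville's theorem -/

/-- The triangular number `n(n-1)/2`, for all integers `n`. -/
def tri (n : ℤ) : ℤ := n * (n - 1) / 2

lemma two_mul_tri (n : ℤ) : 2 * tri n = n * (n - 1) := by
  unfold tri
  have h : (2 : ℤ) ∣ n * (n - 1) := by
    rcases Int.even_or_odd' n with ⟨k, rfl | rfl⟩
    · exact ⟨k * (2 * k - 1), by ring⟩
    · exact ⟨(2 * k + 1) * k, by ring⟩
  exact Int.mul_ediv_cancel' h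

lemma tri_eq_iff {n a : ℤ} (h : n * (n - 1) = 2 * a) : tri n = a := by
  have := two_mul_tri n; omega

lemma tri_succ (n : ℤ) : tri (n + 1) = tri n + n := by
  have h := two_mul_tri n
  exact tri_eq_iff (by linear_combination -h)

lemma tri_one_sub (n : ℤ) : tri (1 - n) = tri n := by
  have h := two_mul_tri n
  exact tri_eq_iff (by linear_combination -h)

lemma tri_neg (n : ℤ) : tri (-n) = tri n + n := by
  have h := two_mul_tri n
  exact tri_eq_iff (by linear_combination -h)

lemma summable_tri {ρ r : ℝ} (h0 : 0 < ρ) (h1 : ρ < 1) (hr : 0 < r) :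
    Summable fun n : ℤ => ρ ^ tri n * r ^ n := by
  have ht : Tendsto (fun n : ℕ => ρ ^ n) atTop (𝓝 0) :=
    tendsto_pow_atTop_nhds_zero_of_lt_one h0.le h1
  apply Summable.of_nat_of_neg
  · refine summable_of_ratio_test_tendsto_lt_one (l := 0) (by norm_num)
      (Eventually.of_forall fun n => by positivity) ?_
    have : (fun n : ℕ => ‖ρ ^ tri ((n + 1 : ℕ) : ℤ) * r ^ ((n + 1 : ℕ) : ℤ)‖ /
        ‖ρ ^ tri (n : ℤ) * r ^ (n : ℤ)‖) = fun n : ℕ => ρ ^ n * r := by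
      funext n
      rw [Real.norm_of_nonneg (by positivity), Real.norm_of_nonneg (by positivity)]
      push_cast
      rw [tri_succ, zpow_add₀ h0.ne', zpow_add₀ hr.ne', zpow_natCast ρ n]
      field_simp
    rw [this]
    simpa using ht.mul_const r
  · refine summable_of_ratio_test_tendsto_lt_one (l := 0) (by norm_num)
      (Eventually.of_forall fun n => by positivity) ?_
    have : (fun n : ℕ => ‖ρ ^ tri (-((n + 1 : ℕ) : ℤ)) * r ^ (-((n + 1 : ℕ) : ℤ))‖ /
        ‖ρ ^ tri (-(n : ℤ)) * r ^ (-(n : ℤ))‖) = fun n : ℕ => ρ ^ n * (ρ / r) := by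
      funext n
      rw [Real.norm_of_nonneg (by positivity), Real.norm_of_nonneg (by positivity)]
      push_cast
      have e : tri (-((n : ℤ) + 1)) = tri (-(n : ℤ)) + n + 1 := by
        simp only [tri_neg, tri_succ]; ring
      rw [e, zpow_add₀ h0.ne', zpow_add₀ h0.ne', neg_add, zpow_add₀ hr.ne', zpow_natCast ρ n]
      simp only [zpow_one, zpow_neg]
      field_simp
    rw [this]
    simpa using ht.mul_const (ρ / r)

/-- The theta series `∑ (-1)ⁿ p^(n(n-1)/2) xⁿ` over all integers `n`. -/
noncomputable def Th (p x : ℂ) : ℂ := ∑' n : ℤ, (-1) ^ n * p ^ tri n * x ^ n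

lemma norm_sign (n : ℤ) : ‖((-1 : ℂ) ^ n)‖ = 1 := by simp

lemma norm_th_term (p x : ℂ) (n : ℤ) :
    ‖(-1) ^ n * p ^ tri n * x ^ n‖ = ‖p‖ ^ tri n * ‖x‖ ^ n := by
  simp [norm_zpow]

lemma summable_th_norm {p x : ℂ} (h0 : p ≠ 0) (h1 : ‖p‖ < 1) (hx : x ≠ 0) :
    Summable fun n : ℤ => ‖(-1) ^ n * p ^ tri n * x ^ n‖ := by
  simp only [norm_th_term]
  exact summable_tri (norm_pos_iff.2 h0) h1 (norm_pos_iff.2 hx)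

lemma summable_th {p x : ℂ} (h0 : p ≠ 0) (h1 : ‖p‖ < 1) (hx : x ≠ 0) :
    Summable fun n : ℤ => (-1) ^ n * p ^ tri n * x ^ n :=
  (summable_th_norm h0 h1 hx).of_norm

lemma hasSum_th {p x : ℂ} (h0 : p ≠ 0) (h1 : ‖p‖ < 1) (hx : x ≠ 0) :
    HasSum (fun n : ℤ => (-1) ^ n * p ^ tri n * x ^ n) (Th p x) :=
  (summable_th h0 h1 hx).hasSum

lemma neg_one_zpow_succ (n : ℤ) : (-1 : ℂ) ^ (n + 1) = -(-1) ^ n := by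
  rw [zpow_add₀ (by norm_num)]; simp

lemma neg_one_zpow_neg (n : ℤ) : (-1 : ℂ) ^ (-n) = (-1) ^ n := by
  rw [← inv_zpow', show ((-1 : ℂ))⁻¹ = -1 by norm_num]

lemma th_mul {p x : ℂ} (h0 : p ≠ 0) (hx : x ≠ 0) : Th p (p * x) = -x⁻¹ * Th p x := by
  unfold Th
  rw [← tsum_mul_left, ← (Equiv.addRight (1 : ℤ)).tsum_eq fun n : ℤ =>
    -x⁻¹ * ((-1) ^ n * p ^ tri n * x ^ n)]
  congr 1; funext n
  simp only [Equiv.coe_addRight]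
  rw [tri_succ, neg_one_zpow_succ, zpow_add₀ h0, zpow_add₀ hx, mul_zpow]
  simp only [zpow_one]; field_simp

lemma th_inv {p x : ℂ} (hx : x ≠ 0) : Th p x⁻¹ = -x⁻¹ * Th p x := by
  unfold Th
  rw [← tsum_mul_left, ← (Equiv.subLeft (1 : ℤ)).tsum_eq]
  congr 1; funext n
  simp only [Equiv.subLeft_apply]
  rw [tri_one_sub, inv_zpow', show -(1 - n) = n + -1 by ring, show (1 - n) = -n + 1 by ring,
    neg_one_zpow_succ, zpow_add₀ hx, neg_one_zpow_neg]
  simp only [zpow_neg_one]; ring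

lemma th_one (p : ℂ) : Th p 1 = 0 := by
  have h := th_inv (p := p) (x := 1) one_ne_zero
  simp only [inv_one] at h
  linear_combination h / 2

lemma th_div {p x : ℂ} (h0 : p ≠ 0) (hx : x ≠ 0) : Th p (p * x⁻¹) = Th p x := by
  rw [th_mul h0 (inv_ne_zero hx), th_inv hx]; field_simp

/-- A series of functions holomorphic on `ℂ*` that is dominated on closed annuli is holomorphic,
and may be differentiated termwise. -/
lemma differentiableOn_series {F : ℤ → ℂ → ℂ} (hF : ∀ n, DifferentiableOn ℂ (F n) {0}ᶜ)
    (hb : ∀ r₁ r₂ : ℝ, 0 < r₁ → r₁ < r₂ → ∃ u : ℤ → ℝ, Summable u ∧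
      ∀ n x, r₁ ≤ ‖x‖ → ‖x‖ ≤ r₂ → ‖F n x‖ ≤ u n) :
    DifferentiableOn ℂ (fun x => ∑' n, F n x) {0}ᶜ ∧
      ∀ x ≠ 0, HasSum (fun n => deriv (F n) x) (deriv (fun x => ∑' n, F n x) x) := by
  have key : ∀ x : ℂ, x ≠ 0 → ∃ U : Set ℂ, IsOpen U ∧ x ∈ U ∧ U ⊆ {0}ᶜ ∧
      ∃ u : ℤ → ℝ, Summable u ∧ ∀ n, ∀ z ∈ U, ‖F n z‖ ≤ u n := by
    intro x hx
    have hx' : 0 < ‖x‖ := norm_pos_iff.2 hx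
    obtain ⟨u, hu, hub⟩ := hb (‖x‖ / 2) (2 * ‖x‖) (by positivity) (by linarith)
    refine ⟨{z | ‖x‖ / 2 < ‖z‖} ∩ {z | ‖z‖ < 2 * ‖x‖},
      (isOpen_lt continuous_const continuous_norm).inter
        (isOpen_lt continuous_norm continuous_const),
      ⟨show ‖x‖ / 2 < ‖x‖ by linarith, show ‖x‖ < 2 * ‖x‖ by linarith⟩,
      ?_, u, hu, fun n z hz => hub n z hz.1.le hz.2.le⟩
    rintro z ⟨hz, -⟩ (rfl : z = 0)
    simp at hz; linarith
  constructor
  · intro x hx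
    obtain ⟨U, hU, hxU, hU0, u, hu, hub⟩ := key x hx
    exact ((Complex.differentiableOn_tsum_of_summable_norm hu
      (fun n => (hF n).mono hU0) hU hub).differentiableAt (hU.mem_nhds hxU)).differentiableWithinAt
  · intro x hx
    obtain ⟨U, hU, hxU, hU0, u, hu, hub⟩ := key x hx
    exact Complex.hasSum_deriv_of_summable_norm hu (fun n => (hF n).mono hU0) hU hub hxU

lemma zpow_le_add {r₁ r₂ t : ℝ} (h1 : 0 < r₁) (h2 : r₁ ≤ t) (h3 : t ≤ r₂) (n : ℤ) :
    t ^ n ≤ r₁ ^ n + r₂ ^ n := by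
  have ht : 0 < t := h1.trans_le h2
  have hr2 : 0 < r₂ := ht.trans_le h3
  rcases le_total 0 n with h | h
  · have : t ^ n ≤ r₂ ^ n := zpow_le_zpow_left₀ h ht.le h3
    have : 0 < r₁ ^ n := by positivity
    linarith
  · have : t ^ n ≤ r₁ ^ n := by
      have e : ∀ a : ℝ, a ^ n = (a ^ (-n))⁻¹ := fun a => by simp
      rw [e, e]
      exact inv_anti₀ (by positivity) (zpow_le_zpow_left₀ (by omega) h1.le h2)
    have : 0 < r₂ ^ n := by positivity
    linarith

lemma th_bounds {p : ℂ} (h0 : p ≠ 0) (h1 : ‖p‖ < 1) (r₁ r₂ : ℝ) (hr : 0 < r₁) (hr' : r₁ < r₂) :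
    ∃ u : ℤ → ℝ, Summable u ∧ ∀ n (x : ℂ), r₁ ≤ ‖x‖ → ‖x‖ ≤ r₂ →
      ‖(-1) ^ n * p ^ tri n * x ^ n‖ ≤ u n := by
  have hp := norm_pos_iff.2 h0
  refine ⟨fun n => ‖p‖ ^ tri n * r₁ ^ n + ‖p‖ ^ tri n * r₂ ^ n,
    (summable_tri hp h1 hr).add (summable_tri hp h1 (hr.trans hr')), fun n x hx1 hx2 => ?_⟩
  rw [norm_th_term]
  beta_reduce
  rw [← mul_add]
  exact mul_le_mul_of_nonneg_left (zpow_le_add hr hx1 hx2 n) (by positivity)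

lemma th_term_diff (c : ℂ) (n : ℤ) : DifferentiableOn ℂ (fun x : ℂ => c * x ^ n) {0}ᶜ :=
  fun _ hx => ((differentiableAt_zpow.2 (Or.inl hx)).const_mul c).differentiableWithinAt

lemma differentiableOn_th {p : ℂ} (h0 : p ≠ 0) (h1 : ‖p‖ < 1) :
    DifferentiableOn ℂ (Th p) {0}ᶜ :=
  (differentiableOn_series (fun n => th_term_diff _ n) (th_bounds h0 h1)).1

lemma differentiableAt_of_punctured {f : ℂ → ℂ} (h : DifferentiableOn ℂ f {0}ᶜ) {x : ℂ}
    (hx : x ≠ 0) : DifferentiableAt ℂ f x :=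
  h.differentiableAt (isOpen_compl_singleton.mem_nhds hx)

lemma differentiableAt_th {p x : ℂ} (h0 : p ≠ 0) (h1 : ‖p‖ < 1) (hx : x ≠ 0) :
    DifferentiableAt ℂ (Th p) x :=
  differentiableAt_of_punctured (differentiableOn_th h0 h1) hx

lemma hasSum_deriv_th {p x : ℂ} (h0 : p ≠ 0) (h1 : ‖p‖ < 1) (hx : x ≠ 0) :
    HasSum (fun n : ℤ => (-1) ^ n * p ^ tri n * (n * x ^ (n - 1))) (deriv (Th p) x) := by
  have := (differentiableOn_series (fun n => th_term_diff ((-1) ^ n * p ^ tri n) n)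
    (th_bounds h0 h1)).2 x hx
  convert this using 1
  · funext n
    rw [deriv_const_mul _ (differentiableAt_zpow.2 (Or.inl hx)), deriv_zpow]
  · rfl

/-- Liouville's theorem on `ℂ*`: a holomorphic function invariant under `z ↦ Qz` is constant. -/
lemma elliptic_const {h : ℂ → ℂ} {Q : ℂ} (hd : DifferentiableOn ℂ h {0}ᶜ) (h0 : Q ≠ 0)
    (h1 : ‖Q‖ < 1) (hQ : ∀ z ≠ 0, h (Q * z) = h z) {z w : ℂ} (hz : z ≠ 0) (hw : w ≠ 0) :
    h z = h w := by
  have hp := norm_pos_iff.2 h0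
  have hinv : ∀ n : ℤ, ∀ z ≠ 0, h (Q ^ n * z) = h z := by
    intro n
    induction n using Int.induction_on with
    | zero => simp
    | succ i ih =>
      intro z hz
      rw [zpow_add₀ h0, zpow_one, mul_comm (Q ^ (i : ℤ)), mul_assoc, hQ _ (by positivity), ih z hz]
    | pred i ih =>
      intro z hz
      rw [← hQ _ (by positivity), ← ih z hz, ← mul_assoc, ← zpow_one_add₀ h0]
      congr 3; ring
  set S : Set ℂ := {z | ‖Q‖ ≤ ‖z‖ ∧ ‖z‖ ≤ 1} with hS
  have hcpt : IsCompact S := by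
    refine Metric.isCompact_of_isClosed_isBounded
      ((isClosed_le continuous_const continuous_norm).inter
        (isClosed_le continuous_norm continuous_const)) ?_
    exact (Metric.isBounded_closedBall (x := (0 : ℂ)) (r := 1)).subset fun z hz => by
      simpa using hz.2
  have hS0 : S ⊆ {0}ᶜ := by
    rintro z ⟨h1, h2⟩ (rfl : z = 0)
    simp at h1; exact h0 h1
  have hbd : ∃ C, ∀ z ≠ 0, ‖h z‖ ≤ C := by
    obtain ⟨C, hC⟩ := hcpt.exists_bound_of_continuousOn (hd.continuousOn.mono hS0)
    refine ⟨C, fun z hz => ?_⟩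
    have hzp := norm_pos_iff.2 hz
    obtain ⟨n, hn, hn'⟩ := exists_mem_Ico_zpow hzp ((one_lt_inv₀ hp).2 h1)
    rw [← hinv (n + 1) z hz]
    have hQn : 0 < ‖Q‖ ^ n := by positivity
    rw [inv_zpow, inv_le_iff_one_le_mul₀ hQn] at hn
    rw [inv_zpow, lt_inv_comm₀ hzp (by positivity)] at hn'
    refine hC _ ⟨?_, ?_⟩
    · rw [norm_mul, norm_zpow, zpow_add₀ hp.ne', zpow_one]
      nlinarith
    · rw [norm_mul, norm_zpow]
      calc ‖Q‖ ^ (n + 1) * ‖z‖ ≤ ‖z‖⁻¹ * ‖z‖ := by gcongr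
        _ = 1 := inv_mul_cancel₀ hzp.ne'
  obtain ⟨C, hC⟩ := hbd
  have hg : Differentiable ℂ fun w => h (Complex.exp w) := fun w =>
    (differentiableAt_of_punctured hd (Complex.exp_ne_zero w)).comp w
      Complex.differentiable_exp.differentiableAt
  have := hg.apply_eq_apply_of_bounded (by
    rw [isBounded_iff_forall_norm_le]
    exact ⟨C, by rintro _ ⟨w, rfl⟩; exact hC _ (Complex.exp_ne_zero w)⟩)
    (Complex.log z) (Complex.log w)
  simpa [Complex.exp_log hz, Complex.exp_log hw] using this

/-! ### Lerch-type series -/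

section KF
variable {Q : ℂ}

/-- The holomorphic quotient `Th Q z / (1 - z)`. -/
noncomputable def kf (Q z : ℂ) : ℂ := -dslope (Th Q) 1 z

lemma one_sub_mul_kf (z : ℂ) : (1 - z) * kf Q z = Th Q z := by
  have h := sub_smul_dslope (Th Q) 1 z
  rw [th_one, smul_eq_mul] at h
  unfold kf
  linear_combination h

lemma kf_one : kf Q 1 = -deriv (Th Q) 1 := by simp [kf]

lemma differentiableOn_kf (h0 : Q ≠ 0) (h1 : ‖Q‖ < 1) : DifferentiableOn ℂ (kf Q) {0}ᶜ :=
  ((Complex.differentiableOn_dslope (isOpen_compl_singleton.mem_nhds (by simp))).2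
    (differentiableOn_th h0 h1)).neg

lemma kf_inv {z : ℂ} (hz : z ≠ 0) : kf Q z⁻¹ = kf Q z := by
  by_cases h : z = 1
  · simp [h]
  have h2 : (1 - z⁻¹) ≠ 0 := by
    rw [sub_ne_zero]; exact fun e => h (by simpa using e.symm)
  apply mul_left_cancel₀ h2
  rw [one_sub_mul_kf, th_inv hz, ← one_sub_mul_kf z]
  field_simp; ring

lemma deriv_kf_one (h0 : Q ≠ 0) (h1 : ‖Q‖ < 1) : deriv (kf Q) 1 = 0 := by
  have hd : HasDerivAt (kf Q) (deriv (kf Q) 1) 1 :=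
    (differentiableAt_of_punctured (differentiableOn_kf h0 h1) one_ne_zero).hasDerivAt
  have hi : HasDerivAt (fun z : ℂ => z⁻¹) (-1) 1 := by
    simpa using hasDerivAt_inv (one_ne_zero (α := ℂ))
  have hc : HasDerivAt (fun z => kf Q z⁻¹) (deriv (kf Q) 1 * (-1)) 1 :=
    HasDerivAt.comp (h₂ := kf Q) 1 (by simpa using hd) hi
  have he : (fun z => kf Q z⁻¹) =ᶠ[𝓝 1] kf Q := by
    filter_upwards [isOpen_compl_singleton.mem_nhds (show (1 : ℂ) ∈ ({0}ᶜ : Set ℂ) by simp)]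
      with z hz using kf_inv hz
  have := (hd.congr_of_eventuallyEq he).unique hc
  linear_combination this / 2

lemma th_zpow_mul (h0 : Q ≠ 0) {z : ℂ} (hz : z ≠ 0) (m : ℤ) :
    (-1) ^ m * Q ^ tri m * z ^ m * Th Q (Q ^ m * z) = Th Q z := by
  have step : ∀ m : ℤ, (-1) ^ (m + 1) * Q ^ tri (m + 1) * z ^ (m + 1) * Th Q (Q ^ (m + 1) * z) =
      (-1) ^ m * Q ^ tri m * z ^ m * Th Q (Q ^ m * z) := by
    intro m
    rw [zpow_add₀ h0 m, zpow_one, mul_comm (Q ^ m), mul_assoc Q, th_mul h0 (by positivity),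
      tri_succ, zpow_add₀ h0, zpow_add₀ hz, neg_one_zpow_succ, zpow_one]
    field_simp
  induction m using Int.induction_on with
  | zero => simp [show tri 0 = 0 from rfl]
  | succ i ih => rw [step, ih]
  | pred i ih => rw [← step, sub_add_cancel, ih]

/-- The holomorphic quotient `Th Q z / (1 - z Q ^ m)`. -/
noncomputable def km (Q : ℂ) (m : ℤ) (z : ℂ) : ℂ :=
  (-1) ^ m * Q ^ tri m * z ^ m * kf Q (Q ^ m * z)

lemma one_sub_mul_km (h0 : Q ≠ 0) {z : ℂ} (hz : z ≠ 0) (m : ℤ) :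
    (1 - z * Q ^ m) * km Q m z = Th Q z := by
  rw [← th_zpow_mul h0 hz m, ← one_sub_mul_kf, km]; ring

lemma km_mul (h0 : Q ≠ 0) {z : ℂ} (hz : z ≠ 0) (m : ℤ) :
    km Q m (Q * z) = -z⁻¹ * km Q (m + 1) z := by
  unfold km
  rw [tri_succ, zpow_add₀ h0, zpow_add₀ hz, neg_one_zpow_succ, mul_zpow, zpow_add₀ h0, zpow_one,
    ← mul_assoc (Q ^ m) Q z]
  simp only [zpow_one]
  field_simp

lemma km_zero (z : ℂ) : km Q 0 z = kf Q z := by simp [km, show tri 0 = 0 from rfl]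

lemma differentiableOn_km (h0 : Q ≠ 0) (h1 : ‖Q‖ < 1) (m : ℤ) :
    DifferentiableOn ℂ (km Q m) {0}ᶜ := by
  intro z (hz : z ≠ 0)
  have hk : DifferentiableAt ℂ (fun z => kf Q (Q ^ m * z)) z :=
    (differentiableAt_of_punctured (differentiableOn_kf h0 h1)
      (x := Q ^ m * z) (by positivity)).comp z (by fun_prop)
  exact (((differentiableAt_zpow.2 (Or.inl hz)).const_mul _).mul hk).differentiableWithinAt

lemma one_sub_zpow_ne (h0 : Q ≠ 0) (h1 : ‖Q‖ < 1) {m : ℤ} (hm : m ≠ 0) : 1 - Q ^ m ≠ 0 := by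
  rw [sub_ne_zero]
  intro e
  have h : ‖Q‖ ^ m = 1 := by rw [← norm_zpow, ← e, norm_one]
  have := (zpow_right_injective₀ (norm_pos_iff.2 h0) h1.ne) (h.trans (zpow_zero _).symm)
  exact hm this

lemma km_one (h0 : Q ≠ 0) (h1 : ‖Q‖ < 1) {m : ℤ} (hm : m ≠ 0) : km Q m 1 = 0 := by
  have h := one_sub_mul_km h0 one_ne_zero m
  rw [th_one, one_mul] at h
  exact (mul_eq_zero.1 h).resolve_left (one_sub_zpow_ne h0 h1 hm)

lemma deriv_km_one (h0 : Q ≠ 0) (h1 : ‖Q‖ < 1) (m : ℤ) :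
    deriv (km Q m) 1 = -kf Q 1 * (1 - 1 * Q ^ m)⁻¹ := by
  rcases eq_or_ne m 0 with rfl | hm
  · have : km Q 0 = kf Q := funext km_zero
    simp [this, deriv_kf_one h0 h1]
  have hd : HasDerivAt (km Q m) (deriv (km Q m) 1) 1 :=
    (differentiableAt_of_punctured (differentiableOn_km h0 h1 m) one_ne_zero).hasDerivAt
  have ha : HasDerivAt (fun z : ℂ => 1 - z * Q ^ m) (-(1 * Q ^ m)) 1 :=
    ((hasDerivAt_id (1 : ℂ)).mul_const _).const_sub 1
  have hj := (differentiableAt_th h0 h1 one_ne_zero).hasDerivAt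
  have he : (fun z : ℂ => (1 - z * Q ^ m) * km Q m z) =ᶠ[𝓝 1] Th Q := by
    filter_upwards [isOpen_compl_singleton.mem_nhds (show (1 : ℂ) ∈ ({0}ᶜ : Set ℂ) by simp)]
      with z hz using one_sub_mul_km h0 hz m
  have h := (ha.mul hd).unique (hj.congr_of_eventuallyEq he)
  have hne := one_sub_zpow_ne h0 h1 hm
  rw [km_one h0 h1 hm] at h
  rw [kf_one]
  simp only [one_mul] at h ⊢
  field_simp
  linear_combination h

/-- The sum of the absolute values of the terms of `Th Q` at a point of modulus `r`. -/
noncomputable def jp (Q : ℂ) (r : ℝ) : ℝ := ∑' n : ℤ, ‖Q‖ ^ tri n * r ^ n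

lemma jp_le (h0 : Q ≠ 0) (h1 : ‖Q‖ < 1) {r₁ r₂ t : ℝ} (hr : 0 < r₁) (h2 : r₁ ≤ t) (h3 : t ≤ r₂) :
    jp Q t ≤ jp Q r₁ + jp Q r₂ := by
  have hp := norm_pos_iff.2 h0
  have s1 := summable_tri hp h1 hr
  have s2 := summable_tri hp h1 (hr.trans_le h2)
  have s3 := summable_tri hp h1 ((hr.trans_le h2).trans_le h3)
  unfold jp
  rw [← s1.tsum_add s3]
  refine s2.tsum_le_tsum (fun n => ?_) (s1.add s3)
  rw [← mul_add]
  exact mul_le_mul_of_nonneg_left (zpow_le_add hr h2 h3 n) (by positivity)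

lemma norm_th_le (h0 : Q ≠ 0) (h1 : ‖Q‖ < 1) {z : ℂ} (hz : z ≠ 0) : ‖Th Q z‖ ≤ jp Q ‖z‖ := by
  refine (norm_tsum_le_tsum_norm (summable_th_norm h0 h1 hz)).trans_eq ?_
  simp only [norm_th_term, jp]

/-- The quotients `Th Q z / (1 - z Q ^ m)` are bounded uniformly in `m`: away from the zero of the
denominator this is the bound for `Th Q`, and near it `kf Q` is evaluated close to `1`. -/
lemma km_bound (h0 : Q ≠ 0) (h1 : ‖Q‖ < 1) :
    ∃ C : ℝ, 0 ≤ C ∧ ∀ (m : ℤ) (z : ℂ), z ≠ 0 → ‖km Q m z‖ ≤ C * jp Q ‖z‖ := by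
  have hp := norm_pos_iff.2 h0
  have hsub : Metric.closedBall (1 : ℂ) (1 / 2) ⊆ {0}ᶜ := by
    rintro z hz (rfl : z = 0)
    simp at hz; norm_num at hz
  obtain ⟨C, hC⟩ := (isCompact_closedBall (1 : ℂ) (1 / 2)).exists_bound_of_continuousOn
    ((differentiableOn_kf h0 h1).continuousOn.mono hsub)
  refine ⟨max 2 C, by positivity, fun m z hz => ?_⟩
  have hz' := norm_pos_iff.2 hz
  have hs := summable_tri hp h1 hz'
  have hj : 0 ≤ jp Q ‖z‖ := tsum_nonneg fun n => by positivity
  by_cases h : ‖1 - z * Q ^ m‖ ≤ 1 / 2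
  · have hk : ‖kf Q (Q ^ m * z)‖ ≤ C := hC _ (by
      rw [Metric.mem_closedBall, dist_comm, dist_eq_norm, mul_comm]; exact h)
    have ht : ‖Q‖ ^ tri m * ‖z‖ ^ m ≤ jp Q ‖z‖ :=
      hs.le_tsum m fun n _ => by positivity
    have hC0 : 0 ≤ C := (norm_nonneg _).trans hk
    calc ‖km Q m z‖ = (‖Q‖ ^ tri m * ‖z‖ ^ m) * ‖kf Q (Q ^ m * z)‖ := by
          rw [km, norm_mul, norm_th_term]
      _ ≤ jp Q ‖z‖ * max 2 C := by gcongr; exact hk.trans (le_max_right _ _)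
      _ = _ := mul_comm _ _
  · push Not at h
    have h2 : ‖1 - z * Q ^ m‖ * ‖km Q m z‖ ≤ jp Q ‖z‖ := by
      rw [← norm_mul, one_sub_mul_km h0 hz]; exact norm_th_le h0 h1 hz
    have h3 : ‖km Q m z‖ ≤ 2 * jp Q ‖z‖ := by nlinarith [norm_nonneg (km Q m z)]
    exact h3.trans (mul_le_mul_of_nonneg_right (le_max_left _ _) hj)

/-- The Lerch-type series `∑ (-1)ᵐ Q^(3m(m+1)/2) wᵐ / (1 - z Qᵐ)`; a term whose denominator
vanishes is dropped. -/
noncomputable def LL (Q z w : ℂ) : ℂ :=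
  ∑' m : ℤ, (-1) ^ m * (Q ^ 3) ^ tri (m + 1) * w ^ m * (1 - z * Q ^ m)⁻¹

/-- The product `Th Q z * LL Q z w`, continued holomorphically to all `z ≠ 0`. -/
noncomputable def JL (Q w z : ℂ) : ℂ :=
  ∑' m : ℤ, (-1) ^ m * (Q ^ 3) ^ tri (m + 1) * w ^ m * km Q m z

lemma cube_ne (h0 : Q ≠ 0) : Q ^ 3 ≠ 0 := pow_ne_zero 3 h0

lemma cube_lt (h1 : ‖Q‖ < 1) : ‖Q ^ 3‖ < 1 := by
  rw [norm_pow]; exact pow_lt_one₀ (norm_nonneg _) h1 (by norm_num)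

lemma lerch_coeff (h0 : Q ≠ 0) (w : ℂ) (m : ℤ) :
    (-1) ^ m * (Q ^ 3) ^ tri (m + 1) * w ^ m = (-1) ^ m * (Q ^ 3) ^ tri m * (Q ^ 3 * w) ^ m := by
  rw [tri_succ, zpow_add₀ (cube_ne h0), mul_zpow]; ring

lemma JL_bounds (h0 : Q ≠ 0) (h1 : ‖Q‖ < 1) {w : ℂ} (hw : w ≠ 0) (r₁ r₂ : ℝ) (hr : 0 < r₁)
    (hr' : r₁ < r₂) : ∃ u : ℤ → ℝ, Summable u ∧ ∀ (m : ℤ) (z : ℂ), r₁ ≤ ‖z‖ → ‖z‖ ≤ r₂ →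
      ‖(-1) ^ m * (Q ^ 3) ^ tri (m + 1) * w ^ m * km Q m z‖ ≤ u m := by
  obtain ⟨C, hC, hb⟩ := km_bound h0 h1
  refine ⟨fun m => ‖(-1) ^ m * (Q ^ 3) ^ tri m * (Q ^ 3 * w) ^ m‖ * (C * (jp Q r₁ + jp Q r₂)),
    (summable_th_norm (cube_ne h0) (cube_lt h1) (mul_ne_zero (cube_ne h0) hw)).mul_right _,
    fun m z hz1 hz2 => ?_⟩
  rw [norm_mul, lerch_coeff h0]
  have hz : z ≠ 0 := norm_pos_iff.1 (hr.trans_le hz1)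
  refine mul_le_mul_of_nonneg_left ?_ (norm_nonneg _)
  exact (hb m z hz).trans (mul_le_mul_of_nonneg_left (jp_le h0 h1 hr hz1 hz2) hC)

lemma JL_term_diff (h0 : Q ≠ 0) (h1 : ‖Q‖ < 1) (w : ℂ) (m : ℤ) :
    DifferentiableOn ℂ (fun z => (-1) ^ m * (Q ^ 3) ^ tri (m + 1) * w ^ m * km Q m z) {0}ᶜ :=
  (differentiableOn_km h0 h1 m).const_mul _

lemma differentiableOn_JL (h0 : Q ≠ 0) (h1 : ‖Q‖ < 1) {w : ℂ} (hw : w ≠ 0) :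
    DifferentiableOn ℂ (JL Q w) {0}ᶜ :=
  (differentiableOn_series (JL_term_diff h0 h1 w) (JL_bounds h0 h1 hw)).1

lemma summable_JL (h0 : Q ≠ 0) (h1 : ‖Q‖ < 1) {w z : ℂ} (hw : w ≠ 0) (hz : z ≠ 0) :
    Summable fun m : ℤ => (-1) ^ m * (Q ^ 3) ^ tri (m + 1) * w ^ m * km Q m z := by
  have hz' := norm_pos_iff.2 hz
  obtain ⟨u, hu, hb⟩ := JL_bounds h0 h1 hw ‖z‖ (‖z‖ + 1) hz' (by linarith)
  exact Summable.of_norm_bounded hu fun m => hb m z le_rfl (by linarith)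

lemma JL_eq (h0 : Q ≠ 0) {z : ℂ} (w : ℂ) (hz : z ≠ 0) (hj : Th Q z ≠ 0) :
    JL Q w z = Th Q z * LL Q z w := by
  unfold JL LL
  rw [← tsum_mul_left]
  congr 1; funext m
  have h := one_sub_mul_km h0 hz m
  have hne : 1 - z * Q ^ m ≠ 0 := by
    intro e; rw [e, zero_mul] at h; exact hj h.symm
  rw [← h]; field_simp

lemma JL_one (h0 : Q ≠ 0) (h1 : ‖Q‖ < 1) (w : ℂ) : JL Q w 1 = kf Q 1 := by
  unfold JL
  rw [tsum_eq_single 0 fun m hm => by rw [km_one h0 h1 hm, mul_zero]]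
  simp [km_zero, show tri 1 = 0 from rfl]

lemma deriv_JL_one (h0 : Q ≠ 0) (h1 : ‖Q‖ < 1) {w : ℂ} (hw : w ≠ 0) :
    HasDerivAt (JL Q w) (-kf Q 1 * LL Q 1 w) 1 := by
  have hd := (differentiableOn_series (JL_term_diff h0 h1 w) (JL_bounds h0 h1 hw)).2 1 one_ne_zero
  have he : deriv (JL Q w) 1 = -kf Q 1 * LL Q 1 w := by
    rw [show JL Q w = fun z => ∑' m : ℤ, (-1) ^ m * (Q ^ 3) ^ tri (m + 1) * w ^ m * km Q m z
      from rfl, ← hd.tsum_eq, LL, ← tsum_mul_left]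
    congr 1; funext m
    rw [deriv_const_mul _ (differentiableAt_of_punctured (differentiableOn_km h0 h1 m)
      one_ne_zero), deriv_km_one h0 h1]
    ring
  rw [← he]
  exact (differentiableAt_of_punctured (differentiableOn_JL h0 h1 hw) one_ne_zero).hasDerivAt

/-- Shifting `z` by `Q` reproduces `JL` up to theta functions of modulus `Q³`. -/
lemma JL_mul (h0 : Q ≠ 0) (h1 : ‖Q‖ < 1) {w z : ℂ} (hw : w ≠ 0) (hz : z ≠ 0) :
    JL Q w (Q * z) = w⁻¹ * (z ^ 2 * JL Q w z + Th Q z *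
      (z⁻¹ * Th (Q ^ 3) w + Th (Q ^ 3) (Q * w) + z * Th (Q ^ 3) (Q ^ 2 * w))) := by
  have hQ := cube_ne h0
  have hQ1 := cube_lt h1
  have t0 := hasSum_th hQ hQ1 hw
  have t1 := hasSum_th hQ hQ1 (mul_ne_zero h0 hw)
  have t2 := hasSum_th hQ hQ1 (mul_ne_zero (pow_ne_zero 2 h0) hw)
  have s := (summable_JL h0 h1 hw hz).hasSum
  have key := ((s.mul_left (z ^ 2)).add
    ((((t0.mul_left z⁻¹).add t1).add (t2.mul_left z)).mul_left (Th Q z))).mul_left w⁻¹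
  refine Eq.trans ?_ ((Equiv.addRight (1 : ℤ)).hasSum_iff.2 key).tsum_eq
  unfold JL
  congr 1; funext m
  simp only [Function.comp, Equiv.coe_addRight]
  rw [km_mul h0 hz, ← one_sub_mul_km h0 hz (m + 1), tri_succ (m + 1), zpow_add₀ hQ (tri (m + 1)),
    neg_one_zpow_succ, zpow_add₀ hw m 1, mul_zpow, mul_zpow, zpow_add₀ hw m 1, zpow_one]
  rw [show (Q ^ 2) ^ (m + 1) = (Q ^ (m + 1)) ^ 2 by
      rw [← zpow_natCast, ← zpow_natCast, ← zpow_mul, ← zpow_mul, mul_comm],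
    show (Q ^ 3) ^ (m + 1) = (Q ^ (m + 1)) ^ 3 by
      rw [← zpow_natCast, ← zpow_natCast, ← zpow_mul, ← zpow_mul, mul_comm]]
  set X := Q ^ (m + 1)
  field_simp
  ring

end KF

/-! ### The three-term relation -/

section ZZ
variable {Q : ℂ}

/-- The multiplier of the middle term in the three-term relation between Lerch-type series. -/
noncomputable def lam (Q ζ : ℂ) : ℂ :=
  (ζ ^ 2 * Th (Q ^ 3) (Q * (ζ ^ 3)⁻¹) + ζ * Th (Q ^ 3) (Q * ζ ^ 3)) / Th (Q ^ 3) Q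

/-- The combination of the series `JL` whose invariance under `z ↦ Q z` yields the three-term
relation. -/
noncomputable def hh (Q ζ z : ℂ) : ℂ :=
  JL Q (ζ ^ 3)⁻¹ (z * ζ⁻¹) * Th Q z * Th Q (z * ζ) +
    ζ ^ 3 * JL Q (ζ ^ 3) (z * ζ) * Th Q z * Th Q (z * ζ⁻¹) -
    lam Q ζ * JL Q 1 z * Th Q (z * ζ⁻¹) * Th Q (z * ζ)

/-- Both sides agree up to theta functions of modulus `Q³`, and the value of `lam` makes these
cancel. -/
lemma hh_mul (h0 : Q ≠ 0) (h1 : ‖Q‖ < 1) (hη : Th (Q ^ 3) Q ≠ 0) {ζ z : ℂ} (hζ : ζ ≠ 0)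
    (hz : z ≠ 0) : hh Q ζ (Q * z) = hh Q ζ z := by
  have hQ := cube_ne h0
  have hl : lam Q ζ * Th (Q ^ 3) Q =
      ζ ^ 2 * Th (Q ^ 3) (Q * (ζ ^ 3)⁻¹) + ζ * Th (Q ^ 3) (Q * ζ ^ 3) := by
    unfold lam; field_simp
  have e1 : Th (Q ^ 3) (ζ ^ 3)⁻¹ = -(ζ ^ 3)⁻¹ * Th (Q ^ 3) (ζ ^ 3) := th_inv (by positivity)
  have e2 : Th (Q ^ 3) (Q ^ 2 * (ζ ^ 3)⁻¹) = Th (Q ^ 3) (Q * ζ ^ 3) := by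
    rw [← th_div hQ (x := Q * ζ ^ 3) (by positivity)]
    congr 1; field_simp
  have e3 : Th (Q ^ 3) (Q ^ 2 * ζ ^ 3) = Th (Q ^ 3) (Q * (ζ ^ 3)⁻¹) := by
    rw [← th_div hQ (x := Q * (ζ ^ 3)⁻¹) (by positivity)]
    congr 1; field_simp
  have e4 : Th (Q ^ 3) (Q ^ 2 * 1) = Th (Q ^ 3) Q := by
    rw [← th_div hQ (x := Q) h0]
    congr 1; field_simp
  unfold hh
  rw [mul_assoc Q z, mul_assoc Q z,
    JL_mul h0 h1 (w := (ζ ^ 3)⁻¹) (z := z * ζ⁻¹) (by positivity) (by positivity),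
    JL_mul h0 h1 (w := ζ ^ 3) (z := z * ζ) (by positivity) (by positivity),
    JL_mul h0 h1 (w := 1) (z := z) one_ne_zero hz,
    th_mul h0 hz, th_mul (x := z * ζ) h0 (by positivity), th_mul (x := z * ζ⁻¹) h0 (by positivity),
    e1, e2, e3, e4, th_one, mul_one]
  generalize Th Q (z * ζ⁻¹) = a, Th Q (z * ζ) = b, Th (Q ^ 3) (Q * (ζ ^ 3)⁻¹) = c,
    Th (Q ^ 3) (Q * ζ ^ 3) = d, JL Q (ζ ^ 3)⁻¹ (z * ζ⁻¹) = e at *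
  field_simp
  linear_combination (-(z + z ^ 2) * a * b * Th Q z) * hl

lemma differentiableOn_hh (h0 : Q ≠ 0) (h1 : ‖Q‖ < 1) {ζ : ℂ} (hζ : ζ ≠ 0) :
    DifferentiableOn ℂ (hh Q ζ) {0}ᶜ := by
  intro z (hz : z ≠ 0)
  have comp : ∀ {f : ℂ → ℂ} (c : ℂ), c ≠ 0 → DifferentiableOn ℂ f {0}ᶜ →
      DifferentiableAt ℂ (fun z => f (z * c)) z := fun c hc hf =>
    (differentiableAt_of_punctured hf (x := z * c) (by positivity)).comp z (by fun_prop)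
  have hj := differentiableOn_th h0 h1
  have a1 := comp ζ hζ hj
  have a2 := comp ζ⁻¹ (by positivity) hj
  have a3 := comp ζ⁻¹ (by positivity) (differentiableOn_JL h0 h1 (w := (ζ ^ 3)⁻¹) (by positivity))
  have a4 := comp ζ hζ (differentiableOn_JL h0 h1 (w := ζ ^ 3) (by positivity))
  have a5 := differentiableAt_of_punctured (differentiableOn_JL h0 h1 (w := 1) one_ne_zero) hz
  have a6 := differentiableAt_of_punctured hj hz
  exact ((((a3.mul a6).mul a1).add (((a4.const_mul _).mul a6).mul a2)).sub
    (((a5.const_mul _).mul a2).mul a1)).differentiableWithinAt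

/-- The constant value of `hh`, read off at `z = ζ`. -/
lemma hh_eq (h0 : Q ≠ 0) (h1 : ‖Q‖ < 1) (hη : Th (Q ^ 3) Q ≠ 0) {ζ z : ℂ} (hζ : ζ ≠ 0)
    (hz : z ≠ 0) : hh Q ζ z = kf Q 1 * Th Q ζ * Th Q (ζ ^ 2) := by
  rw [elliptic_const (differentiableOn_hh h0 h1 hζ) h0 h1
    (fun z hz => hh_mul h0 h1 hη hζ hz) hz hζ, hh, mul_inv_cancel₀ hζ, JL_one h0 h1, th_one, sq]
  ring

lemma lam_mul (h0 : Q ≠ 0) (h1 : ‖Q‖ < 1) (hη : Th (Q ^ 3) Q ≠ 0) (hk : kf Q 1 ≠ 0) {ζ : ℂ}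
    (hζ : ζ ≠ 0) (hj : Th Q ζ ≠ 0) : lam Q ζ * Th Q ζ = ζ * Th Q (ζ ^ 2) := by
  have h := hh_eq h0 h1 hη hζ one_ne_zero
  rw [hh, JL_one h0 h1, th_one, one_mul, one_mul, th_inv hζ] at h
  apply mul_left_cancel₀ (mul_ne_zero hk hj)
  linear_combination ζ * h - kf Q 1 * lam Q ζ * Th Q ζ ^ 2 * mul_inv_cancel₀ hζ

/-- The three-term relation between Lerch-type series. -/
lemma lerch_three_term (h0 : Q ≠ 0) (h1 : ‖Q‖ < 1) (hη : Th (Q ^ 3) Q ≠ 0) {ζ z : ℂ} (hζ : ζ ≠ 0)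
    (hz : z ≠ 0) (j1 : Th Q z ≠ 0) (j2 : Th Q (z * ζ) ≠ 0) (j3 : Th Q (z * ζ⁻¹) ≠ 0) :
    LL Q (z * ζ⁻¹) (ζ ^ 3)⁻¹ + ζ ^ 3 * LL Q (z * ζ) (ζ ^ 3) - lam Q ζ * LL Q z 1 =
      kf Q 1 * Th Q ζ * Th Q (ζ ^ 2) / (Th Q z * Th Q (z * ζ) * Th Q (z * ζ⁻¹)) := by
  rw [← hh_eq h0 h1 hη hζ hz, hh, JL_eq h0 _ hz j1, JL_eq h0 _ (by positivity) j2,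
    JL_eq h0 _ (by positivity) j3]
  generalize Th Q (z * ζ⁻¹) = a at *
  field_simp

/-- The logarithmic derivative `x ∂ₓ log Th Q x`. -/
noncomputable def DD (Q x : ℂ) : ℂ := x * deriv (Th Q) x / Th Q x

/-- The limiting form of `lerch_three_term` as `z` tends to `ζ`. -/
lemma lerch_three_term_deg (h0 : Q ≠ 0) (h1 : ‖Q‖ < 1) (hη : Th (Q ^ 3) Q ≠ 0) (hk : kf Q 1 ≠ 0)
    {ζ : ℂ} (hζ : ζ ≠ 0) (j1 : Th Q ζ ≠ 0) (j2 : Th Q (ζ ^ 2) ≠ 0) :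
    LL Q 1 (ζ ^ 3)⁻¹ + ζ ^ 3 * LL Q (ζ ^ 2) (ζ ^ 3) - lam Q ζ * LL Q ζ 1 =
      DD Q ζ + DD Q (ζ ^ 2) := by
  have d0 : HasDerivAt (hh Q ζ) 0 ζ := by
    refine (hasDerivAt_const ζ (kf Q 1 * Th Q ζ * Th Q (ζ ^ 2))).congr_of_eventuallyEq ?_
    filter_upwards [isOpen_compl_singleton.mem_nhds hζ] with z hz using hh_eq h0 h1 hη hζ hz
  have hi : ζ * ζ⁻¹ = 1 := mul_inv_cancel₀ hζ
  have dm : ∀ c : ℂ, HasDerivAt (fun z : ℂ => z * c) c ζ := fun c => by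
    simpa using (hasDerivAt_id ζ).mul_const c
  have dj : HasDerivAt (Th Q) (deriv (Th Q) ζ) ζ := (differentiableAt_th h0 h1 hζ).hasDerivAt
  have dj2 : HasDerivAt (fun z => Th Q (z * ζ)) (deriv (Th Q) (ζ ^ 2) * ζ) ζ := by
    refine HasDerivAt.comp (h₂ := Th Q) ζ ?_ (dm ζ)
    rw [sq]; exact (differentiableAt_th h0 h1 (by positivity)).hasDerivAt
  have dj1 : HasDerivAt (fun z => Th Q (z * ζ⁻¹)) (-kf Q 1 * ζ⁻¹) ζ := by
    refine HasDerivAt.comp (h₂ := Th Q) ζ ?_ (dm ζ⁻¹)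
    rw [hi, kf_one, neg_neg]; exact (differentiableAt_th h0 h1 one_ne_zero).hasDerivAt
  have dA : HasDerivAt (fun z => JL Q (ζ ^ 3)⁻¹ (z * ζ⁻¹))
      (-kf Q 1 * LL Q 1 (ζ ^ 3)⁻¹ * ζ⁻¹) ζ := by
    refine HasDerivAt.comp (h₂ := JL Q (ζ ^ 3)⁻¹) ζ ?_ (dm ζ⁻¹)
    rw [hi]; exact deriv_JL_one h0 h1 (by positivity)
  have dB : HasDerivAt (fun z => JL Q (ζ ^ 3) (z * ζ)) (deriv (JL Q (ζ ^ 3)) (ζ * ζ) * ζ) ζ :=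
    HasDerivAt.comp (h₂ := JL Q (ζ ^ 3)) ζ (differentiableAt_of_punctured
      (differentiableOn_JL h0 h1 (by positivity)) (by positivity)).hasDerivAt (dm ζ)
  have dC : HasDerivAt (JL Q 1) (deriv (JL Q 1) ζ) ζ := (differentiableAt_of_punctured
      (differentiableOn_JL h0 h1 one_ne_zero) hζ).hasDerivAt
  have key := d0.unique ((((dA.mul dj).mul dj2).add (((dB.const_mul (ζ ^ 3)).mul dj).mul dj1)).sub
    (((dC.const_mul (lam Q ζ)).mul dj1).mul dj2))
  simp only [Pi.mul_apply, hi, th_one, JL_one h0 h1] at key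
  rw [← sq, JL_eq h0 _ hζ j1, JL_eq h0 _ (by positivity) j2] at key
  unfold DD
  field_simp at key ⊢
  apply mul_left_cancel₀ hk
  linear_combination key

lemma DD_inv (h0 : Q ≠ 0) (h1 : ‖Q‖ < 1) {x : ℂ} (hx : x ≠ 0) (hj : Th Q x ≠ 0) :
    DD Q x⁻¹ = 1 - DD Q x := by
  have d1 : HasDerivAt (fun x => Th Q x⁻¹) (deriv (Th Q) x⁻¹ * -(x ^ 2)⁻¹) x :=
    HasDerivAt.comp (h₂ := Th Q) x (differentiableAt_th h0 h1 (by positivity)).hasDerivAt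
      (hasDerivAt_inv hx)
  have d2 : HasDerivAt (fun x => -x⁻¹ * Th Q x) (-(-(x ^ 2)⁻¹) * Th Q x + -x⁻¹ * deriv (Th Q) x) x :=
    (hasDerivAt_inv hx).neg.mul (differentiableAt_th h0 h1 hx).hasDerivAt
  have he : (fun x => Th Q x⁻¹) =ᶠ[𝓝 x] fun x => -x⁻¹ * Th Q x := by
    filter_upwards [isOpen_compl_singleton.mem_nhds hx] with z hz using th_inv hz
  have key := (d1.congr_of_eventuallyEq he.symm).unique d2
  unfold DD
  rw [th_inv hx]
  field_simp at key ⊢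
  linear_combination key

lemma DD_mul (h0 : Q ≠ 0) (h1 : ‖Q‖ < 1) {x : ℂ} (hx : x ≠ 0) (hj : Th Q x ≠ 0) :
    DD Q (Q * x) = DD Q x - 1 := by
  have dm : HasDerivAt (fun z : ℂ => Q * z) Q x := by
    simpa using (hasDerivAt_id x).const_mul Q
  have d1 : HasDerivAt (fun x => Th Q (Q * x)) (deriv (Th Q) (Q * x) * Q) x :=
    HasDerivAt.comp (h₂ := Th Q) x (differentiableAt_th h0 h1 (by positivity)).hasDerivAt dm
  have d2 : HasDerivAt (fun x => -x⁻¹ * Th Q x) (-(-(x ^ 2)⁻¹) * Th Q x + -x⁻¹ * deriv (Th Q) x) x :=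
    (hasDerivAt_inv hx).neg.mul (differentiableAt_th h0 h1 hx).hasDerivAt
  have he : (fun x => Th Q (Q * x)) =ᶠ[𝓝 x] fun x => -x⁻¹ * Th Q x := by
    filter_upwards [isOpen_compl_singleton.mem_nhds hx] with z hz using th_mul h0 hz
  have key := (d1.congr_of_eventuallyEq he.symm).unique d2
  unfold DD
  rw [th_mul h0 hx]
  field_simp at key ⊢
  linear_combination -key

end ZZ

/-! ### The addition formula and logarithmic derivatives -/

/-- Splitting a sum over the integers into residue classes modulo `N`. -/
lemma tsum_split (N : ℕ) [NeZero N] {f : ℤ → ℂ} (hf : Summable f) :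
    ∑' n, f n = ∑ r : Fin N, ∑' m : ℤ, f (m * N + (r : ℕ)) := by
  set e : Fin N × ℤ ≃ ℤ := (Equiv.prodComm _ _).trans (Int.divModEquiv N).symm with he
  have hs : Summable fun x => f (e x) := e.summable_iff.2 hf
  rw [← e.tsum_eq f, hs.tsum_prod, tsum_fintype]
  rfl

lemma hasSum_of_eq {f g : ℤ → ℂ} {a : ℂ} (h : HasSum f a) (e : ∀ n, g n = f n) : HasSum g a := by
  rwa [funext e]

section Addition
variable {Q : ℂ}

/-- The series `∑ Q^(l²) y^(2l)`. -/
noncomputable def bt0 (Q y : ℂ) : ℂ := Th (Q ^ 2) (-Q * y ^ 2)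

/-- The series `∑ Q^(l²+l) y^(2l+1)`. -/
noncomputable def bt1 (Q y : ℂ) : ℂ := y * Th (Q ^ 2) (-Q ^ 2 * y ^ 2)

lemma sq_lt (h1 : ‖Q‖ < 1) : ‖Q ^ 2‖ < 1 := by
  rw [norm_pow]; exact pow_lt_one₀ (norm_nonneg _) h1 (by norm_num)

lemma neg_one_zpow_mul_self (n : ℤ) : (-1 : ℂ) ^ n * (-1) ^ n = 1 := by
  rw [← mul_zpow]; simp

lemma neg_zpow_eq (a : ℂ) (n : ℤ) : (-a) ^ n = (-1) ^ n * a ^ n := by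
  rw [← mul_zpow, neg_one_mul]

lemma sq_zpow_tri (n : ℤ) : (Q ^ 2) ^ tri n = Q ^ (n * (n - 1)) := by
  rw [← two_mul_tri, zpow_mul]; norm_cast

lemma hasSum_bt0 (h0 : Q ≠ 0) (h1 : ‖Q‖ < 1) {y : ℂ} (hy : y ≠ 0) :
    HasSum (fun l : ℤ => Q ^ (l * l) * y ^ (2 * l)) (bt0 Q y) := by
  have h := hasSum_th (pow_ne_zero 2 h0) (sq_lt h1)
    (x := -Q * y ^ 2) (mul_ne_zero (neg_ne_zero.2 h0) (pow_ne_zero 2 hy))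
  refine hasSum_of_eq h fun n => ?_
  rw [sq_zpow_tri, mul_zpow, neg_zpow_eq Q, show n * n = n * (n - 1) + n by ring,
    zpow_add₀ h0, zpow_mul y 2, show y ^ (2 : ℤ) = y ^ 2 by norm_cast]
  linear_combination (-(Q ^ (n * (n - 1)) * Q ^ n * (y ^ 2) ^ n)) * neg_one_zpow_mul_self n

lemma hasSum_bt1 (h0 : Q ≠ 0) (h1 : ‖Q‖ < 1) {y : ℂ} (hy : y ≠ 0) :
    HasSum (fun l : ℤ => Q ^ (l * l + l) * y ^ (2 * l + 1)) (bt1 Q y) := by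
  have h := (hasSum_th (pow_ne_zero 2 h0) (sq_lt h1)
    (x := -Q ^ 2 * y ^ 2) (mul_ne_zero (neg_ne_zero.2 (pow_ne_zero 2 h0))
      (pow_ne_zero 2 hy))).mul_left y
  refine hasSum_of_eq h fun n => ?_
  rw [sq_zpow_tri, mul_zpow, neg_zpow_eq (Q ^ 2),
    show n * n + n = n * (n - 1) + 2 * n by ring, zpow_add₀ h0, zpow_add₀ hy, zpow_mul y 2,
    zpow_mul Q 2, zpow_one]
  have e : ∀ x : ℂ, x ^ (2 : ℤ) = x ^ 2 := fun x => by norm_cast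
  rw [e, e]
  linear_combination (-(Q ^ (n * (n - 1)) * (Q ^ 2) ^ n * (y ^ 2) ^ n * y)) *
    neg_one_zpow_mul_self n

lemma th_term_mul (h0 : Q ≠ 0) {x y : ℂ} (hx : x ≠ 0) (hy : y ≠ 0) {m n s d t : ℤ}
    (hs : m + n = s) (hd : m - n = d) (ht : tri m + tri n = t) :
    (-1) ^ m * Q ^ tri m * (x * y) ^ m * ((-1) ^ n * Q ^ tri n * (x * y⁻¹) ^ n) =
      (-1) ^ s * Q ^ t * x ^ s * y ^ d := by
  rw [← hs, ← hd, ← ht, zpow_add₀ h0, zpow_add₀ hx, zpow_add₀ (by norm_num), zpow_sub₀ hy, mul_zpow,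
    mul_zpow, inv_zpow]
  ring

lemma neg_one_zpow_two_mul (k : ℤ) : (-1 : ℂ) ^ (2 * k) = 1 := by
  rw [zpow_mul]; norm_num

lemma tri_add (a b : ℤ) : tri (a + b) = tri a + tri b + a * b := by
  have h := two_mul_tri a
  have h' := two_mul_tri b
  exact tri_eq_iff (by linear_combination -h - h')

/-- The addition formula for theta functions. -/
lemma th_mul_th (h0 : Q ≠ 0) (h1 : ‖Q‖ < 1) {x y : ℂ} (hx : x ≠ 0) (hy : y ≠ 0) :
    Th Q (x * y) * Th Q (x * y⁻¹) = x * (bt1 Q x * bt0 Q y - bt0 Q x * bt1 Q y) := by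
  have hxy : x * y ≠ 0 := by positivity
  have hxy' : x * y⁻¹ ≠ 0 := by positivity
  have n1 := summable_th_norm h0 h1 hxy
  have n2 := summable_th_norm h0 h1 hxy'
  have hs := summable_mul_of_summable_norm n1 n2
  -- the index pair `(n + d, n)` is grouped according to `d`
  let e : ℤ × ℤ ≃ ℤ × ℤ :=
    { toFun := fun p => (p.2 + p.1, p.2), invFun := fun p => (p.1 - p.2, p.2),
      left_inv := fun p => by ext <;> simp, right_inv := fun p => by ext <;> simp }
  have hs' := e.summable_iff.2 hs
  have hg := hs'.prod
  have h := hs'.tsum_prod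
  rw [tsum_split 2 hg] at h
  rw [Th, Th, tsum_mul_tsum_of_summable_norm n1 n2, ← e.tsum_eq]
  refine h.trans ?_
  simp only [Fin.sum_univ_two, Function.comp_apply, Equiv.coe_fn_mk, Fin.val_zero, Fin.val_one,
    e]
  have ev : ∀ l : ℤ, ∑' n : ℤ, ((-1) ^ (n + (l * (2 : ℕ) + (0 : ℕ))) *
      Q ^ tri (n + (l * (2 : ℕ) + (0 : ℕ))) * (x * y) ^ (n + (l * (2 : ℕ) + (0 : ℕ))) *
      ((-1) ^ n * Q ^ tri n * (x * y⁻¹) ^ n)) = x * bt1 Q x * (Q ^ (l * l) * y ^ (2 * l)) := by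
    intro l
    rw [← (Equiv.addRight (1 - l)).tsum_eq]
    rw [← (((hasSum_bt1 h0 h1 hx).mul_left x).mul_right _).tsum_eq]
    congr 1; funext k
    simp only [Equiv.coe_addRight]
    push_cast
    have h := two_mul_tri k
    have h' := two_mul_tri l
    rw [th_term_mul h0 hx hy (s := 2 * (k + 1)) (d := 2 * l) (t := (k * k + k) + l * l)
      (by ring) (by ring)
      (by simp only [tri_add, sub_eq_add_neg, tri_neg, mul_comm l 2, two_mul, show tri 1 = 0 from rfl,
            show tri 0 = 0 from rfl]
          linear_combination h + 2 * h'), neg_one_zpow_two_mul, zpow_add₀ h0,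
      show 2 * (k + 1) = 1 + (2 * k + 1) by ring, zpow_one_add₀ hx]
    ring
  have od : ∀ l : ℤ, ∑' n : ℤ, ((-1) ^ (n + (l * (2 : ℕ) + (1 : ℕ))) *
      Q ^ tri (n + (l * (2 : ℕ) + (1 : ℕ))) * (x * y) ^ (n + (l * (2 : ℕ) + (1 : ℕ))) *
      ((-1) ^ n * Q ^ tri n * (x * y⁻¹) ^ n)) =
        -x * bt0 Q x * (Q ^ (l * l + l) * y ^ (2 * l + 1)) := by
    intro l
    rw [← (Equiv.subRight l).tsum_eq]
    rw [← (((hasSum_bt0 h0 h1 hx).mul_left (-x)).mul_right _).tsum_eq]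
    congr 1; funext k
    simp only [Equiv.subRight_apply]
    push_cast
    have h := two_mul_tri k
    have h' := two_mul_tri l
    rw [th_term_mul h0 hx hy (s := 2 * k + 1) (d := 2 * l + 1) (t := k * k + (l * l + l))
      (by ring) (by ring)
      (by simp only [tri_add, sub_eq_add_neg, tri_neg, mul_comm l 2, two_mul, show tri 1 = 0 from rfl,
            show tri 0 = 0 from rfl]
          linear_combination h + 2 * h'), neg_one_zpow_succ, neg_one_zpow_two_mul, zpow_add₀ h0,
      zpow_add₀ hx, zpow_one]
    ring
  rw [tsum_congr ev, tsum_congr od, tsum_mul_left, tsum_mul_left, (hasSum_bt0 h0 h1 hy).tsum_eq,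
    (hasSum_bt1 h0 h1 hy).tsum_eq]
  ring

lemma differentiableAt_bt0 (h0 : Q ≠ 0) (h1 : ‖Q‖ < 1) {y : ℂ} (hy : y ≠ 0) :
    DifferentiableAt ℂ (bt0 Q) y :=
  (differentiableAt_th (pow_ne_zero 2 h0) (sq_lt h1) (x := -Q * y ^ 2)
    (mul_ne_zero (neg_ne_zero.2 h0) (pow_ne_zero 2 hy))).comp y (by fun_prop)

lemma differentiableAt_bt1 (h0 : Q ≠ 0) (h1 : ‖Q‖ < 1) {y : ℂ} (hy : y ≠ 0) :
    DifferentiableAt ℂ (bt1 Q) y :=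
  differentiableAt_id.mul (DifferentiableAt.comp (g := Th (Q ^ 2)) (f := fun y => -Q ^ 2 * y ^ 2) y
    (differentiableAt_th (pow_ne_zero 2 h0) (sq_lt h1)
      (mul_ne_zero (neg_ne_zero.2 (pow_ne_zero 2 h0)) (pow_ne_zero 2 hy))) (by fun_prop))

/-- Differentiating `th_mul_th` in its first variable and eliminating the auxiliary series `bt0`
and `bt1` by a Plücker relation expresses a combination of logarithmic derivatives as a theta
quotient. -/
lemma DD_triple (h0 : Q ≠ 0) (h1 : ‖Q‖ < 1) {a : ℂ} (ha : a ≠ 0) (j1 : Th Q a ≠ 0)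
    (j3 : Th Q (a ^ 3) ≠ 0) :
    (3 * DD Q a - DD Q (a ^ 3) - 1) * (Th Q a ^ 3 * Th Q (a ^ 3)) = -kf Q 1 * Th Q (a ^ 2) ^ 3 := by
  have f : ∀ y : ℂ, y ≠ 0 → deriv (Th Q) (a * y) * y * Th Q (a * y⁻¹) +
      Th Q (a * y) * (deriv (Th Q) (a * y⁻¹) * y⁻¹) =
      (bt1 Q a * bt0 Q y - bt0 Q a * bt1 Q y) +
        a * (deriv (bt1 Q) a * bt0 Q y - deriv (bt0 Q) a * bt1 Q y) := by
    intro y hy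
    have d : ∀ c : ℂ, c ≠ 0 → HasDerivAt (fun x => Th Q (x * c)) (deriv (Th Q) (a * c) * c) a :=
      fun c hc => HasDerivAt.comp (h₂ := Th Q) a
        (differentiableAt_th h0 h1 (by positivity)).hasDerivAt
        (by simpa using (hasDerivAt_id a).mul_const c)
    have dl := (d y hy).mul (d y⁻¹ (by positivity))
    have dr := (hasDerivAt_id a).mul (((differentiableAt_bt1 h0 h1 ha).hasDerivAt.mul_const
      (bt0 Q y)).sub ((differentiableAt_bt0 h0 h1 ha).hasDerivAt.mul_const (bt1 Q y)))
    have he : (fun x => Th Q (x * y)) * (fun x => Th Q (x * y⁻¹)) =ᶠ[𝓝 a] (id *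
        ((fun x => bt1 Q x * bt0 Q y) - fun x => bt0 Q x * bt1 Q y)) := by
      filter_upwards [isOpen_compl_singleton.mem_nhds ha] with z hz using th_mul_th h0 h1 hz hy
    have := dl.unique (dr.congr_of_eventuallyEq he)
    simp only [id, Pi.sub_apply, one_mul] at this
    exact this
  have ha2 : a ^ 2 ≠ 0 := by positivity
  have g1 := th_mul_th h0 h1 ha one_ne_zero
  have g2 := th_mul_th h0 h1 ha ha2
  have g3 := th_mul_th h0 h1 ha2 one_ne_zero
  have f1 := f 1 one_ne_zero
  have f2 := f (a ^ 2) ha2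
  have fa := f a ha
  have e1 : a * a ^ 2 = a ^ 3 := by ring
  have e2 : a * (a ^ 2)⁻¹ = a⁻¹ := by field_simp
  have dd : a⁻¹ * deriv (Th Q) a⁻¹ = (1 - DD Q a) * Th Q a⁻¹ := by
    rw [← DD_inv h0 h1 ha j1, DD]
    have : Th Q a⁻¹ ≠ 0 := by rw [th_inv ha]; simp [ha, j1]
    rw [div_mul_cancel₀ _ this]
  have dd1 : a * deriv (Th Q) a = DD Q a * Th Q a := by unfold DD; field_simp
  have dd3 : a ^ 3 * deriv (Th Q) (a ^ 3) = DD Q (a ^ 3) * Th Q (a ^ 3) := by unfold DD; field_simp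
  have hk : deriv (Th Q) 1 = -kf Q 1 := by rw [kf_one]; ring
  simp only [mul_one, inv_one, e1, e2, mul_inv_cancel₀ ha, th_one, ← sq] at g1 g2 g3 f1 f2 fa
  rw [hk] at fa
  have p1 : a ^ 2 * (deriv (bt1 Q) a * bt0 Q 1 - deriv (bt0 Q) a * bt1 Q 1) =
      (2 * DD Q a - 1) * Th Q a ^ 2 := by
    linear_combination g1 - a * f1 + 2 * Th Q a * dd1
  have p2 : a ^ 2 * (deriv (bt1 Q) a * bt0 Q (a ^ 2) - deriv (bt0 Q) a * bt1 Q (a ^ 2)) =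
      (DD Q (a ^ 3) - DD Q a) * (Th Q (a ^ 3) * Th Q a⁻¹) := by
    have : a * (Th Q (a ^ 3) * (deriv (Th Q) a⁻¹ * (a ^ 2)⁻¹)) =
        Th Q (a ^ 3) * (a⁻¹ * deriv (Th Q) a⁻¹) := by field_simp
    linear_combination g2 - a * f2 + Th Q a⁻¹ * dd3 + Th Q (a ^ 3) * dd + this
  have p3 : a * (deriv (bt1 Q) a * bt0 Q a - deriv (bt0 Q) a * bt1 Q a) =
      -kf Q 1 * a⁻¹ * Th Q (a ^ 2) := by
    linear_combination -fa
  have hinv := th_inv (p := Q) ha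
  have key : (3 * DD Q a - DD Q (a ^ 3) - 1) * (Th Q a ^ 2 * (Th Q (a ^ 3) * Th Q a⁻¹)) =
      a⁻¹ * kf Q 1 * Th Q (a ^ 2) ^ 3 := by
    linear_combination (-(Th Q (a ^ 3) * Th Q a⁻¹)) * p1 + Th Q a ^ 2 * p2 +
      a ^ 2 * (deriv (bt1 Q) a * bt0 Q 1 - deriv (bt0 Q) a * bt1 Q 1) * g2 -
      a ^ 2 * (deriv (bt1 Q) a * bt0 Q (a ^ 2) - deriv (bt0 Q) a * bt1 Q (a ^ 2)) * g1 -
      a ^ 2 * (bt1 Q (a ^ 2) * bt0 Q 1 - bt0 Q (a ^ 2) * bt1 Q 1) * p3 -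
      kf Q 1 * a⁻¹ * Th Q (a ^ 2) * g3
  rw [hinv] at key
  field_simp at key
  linear_combination -key

end Addition

/-! ### Dissections of Euler's product and of the sums `GG` -/

/-- Splitting a sum over the integers into the classes of `s, s + 1, …, s + 4` modulo `5`. -/
lemma tsum_split_five (s : ℤ) {f : ℤ → ℂ} (hf : Summable f) :
    ∑' n, f n = ∑' m : ℤ, f (5 * m + s) + ∑' m : ℤ, f (5 * m + (s + 1)) +
      ∑' m : ℤ, f (5 * m + (s + 2)) + ∑' m : ℤ, f (5 * m + (s + 3)) +
      ∑' m : ℤ, f (5 * m + (s + 4)) := by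
  rw [← (Equiv.addRight s).tsum_eq]
  refine (tsum_split 5 ((Equiv.addRight s).summable_iff.2 hf)).trans ?_
  simp only [Fin.sum_univ_five, Equiv.coe_addRight, Function.comp_apply]
  have e : ∀ (m : ℤ) (i : ℕ), m * ((5 : ℕ) : ℤ) + (i : ℤ) + s = 5 * m + (s + i) :=
    fun m i => by push_cast; ring
  simp only [e]
  simp

section Dissection
variable {q : ℂ}

/-- Euler's product, as the pentagonal series `∑ (-1)ⁿ q^(n(3n-1)/2)`. -/
noncomputable def EE (q : ℂ) : ℂ := Th (q ^ 3) q

/-- The series `∑ (-1)ⁿ q^(n(3n+1)/2 + bn) / (1 - q^(5n))` over nonzero integers `n`; the term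
`n = 0` of the sum below vanishes because `0⁻¹ = 0`. -/
noncomputable def GG (b : ℤ) (q : ℂ) : ℂ :=
  ∑' n : ℤ, (-1) ^ n * q ^ (3 * tri n + (b + 2) * n) * (1 - q ^ (5 * n))⁻¹

lemma tri_five (m r : ℤ) : tri (5 * m + r) = 25 * tri m + (10 + 5 * r) * m + tri r := by
  have h := two_mul_tri m
  have h' := two_mul_tri r
  exact tri_eq_iff (by linear_combination -25 * h - h')

lemma neg_one_five (m r : ℤ) : (-1 : ℂ) ^ (5 * m + r) = (-1) ^ m * (-1) ^ r := by
  rw [show 5 * m + r = 2 * (2 * m) + (m + r) by ring, zpow_add₀ (by norm_num),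
    neg_one_zpow_two_mul, one_mul, zpow_add₀ (by norm_num)]

lemma pow_zpow_eq (q : ℂ) (n : ℕ) (m : ℤ) : (q ^ n) ^ m = q ^ (n * m) := by
  rw [zpow_mul]; norm_cast

lemma inv_one_sub_bound (h0 : q ≠ 0) (h1 : ‖q‖ < 1) (n : ℤ) :
    ‖(1 - q ^ n)⁻¹‖ ≤ (1 - ‖q‖)⁻¹ := by
  have hp := norm_pos_iff.2 h0
  have h1' : 0 < 1 - ‖q‖ := by linarith
  rw [norm_inv]
  rcases lt_trichotomy n 0 with h | rfl | h
  · refine inv_anti₀ h1' ?_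
    have h2 : (1 : ℝ) ≤ ‖q‖ ^ (n + 1) := one_le_zpow_of_nonpos₀ hp h1.le (by omega)
    have h3 : ‖q‖ ^ (n + 1) = ‖q‖ ^ n * ‖q‖ := zpow_add_one₀ hp.ne' n
    have h4 := norm_sub_norm_le (q ^ n) 1
    rw [norm_sub_rev, norm_one, norm_zpow] at h4
    have h5 : (1 : ℝ) ≤ ‖q‖ ^ n := one_le_zpow_of_nonpos₀ hp h1.le h.le
    nlinarith
  · simp [h1.le]
  · refine inv_anti₀ h1' ?_
    have h2 : ‖q‖ ^ (n - 1) ≤ 1 := zpow_le_one₀ hp h1.le (by omega)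
    have h3 : ‖q‖ ^ (n - 1) * ‖q‖ = ‖q‖ ^ n := by
      rw [← zpow_add_one₀ hp.ne', sub_add_cancel]
    have h4 := norm_sub_norm_le 1 (q ^ n)
    rw [norm_one, norm_zpow] at h4
    nlinarith

lemma summable_GG (h0 : q ≠ 0) (h1 : ‖q‖ < 1) (b : ℤ) :
    Summable fun n : ℤ => (-1) ^ n * q ^ (3 * tri n + (b + 2) * n) * (1 - q ^ (5 * n))⁻¹ := by
  have hs := summable_th_norm (cube_ne h0) (cube_lt h1) (zpow_ne_zero (b + 2) h0)
  have h5 : ‖q ^ 5‖ < 1 := by rw [norm_pow]; exact pow_lt_one₀ (norm_nonneg _) h1 (by norm_num)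
  refine Summable.of_norm_bounded (hs.mul_right (1 - ‖q ^ 5‖)⁻¹) fun n => ?_
  have e : (-1) ^ n * q ^ (3 * tri n + (b + 2) * n) =
      (-1) ^ n * (q ^ 3) ^ tri n * (q ^ (b + 2)) ^ n := by
    rw [zpow_add₀ h0, pow_zpow_eq, zpow_mul q (b + 2)]; push_cast; ring
  have e' : q ^ (5 * n) = (q ^ 5) ^ n := by rw [pow_zpow_eq]; norm_cast
  rw [norm_mul, e, e']
  exact mul_le_mul_of_nonneg_left (inv_one_sub_bound (pow_ne_zero 5 h0) h5 n) (norm_nonneg _)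

lemma GG_class (h0 : q ≠ 0) (b r : ℤ) :
    ∑' m : ℤ, ((-1) ^ (5 * m + r) * q ^ (3 * tri (5 * m + r) + (b + 2) * (5 * m + r)) *
      (1 - q ^ (5 * (5 * m + r)))⁻¹) = (-1) ^ r * q ^ (3 * tri r + (b + 2) * r) *
      LL (q ^ 25) (q ^ (5 * r)) (q ^ (5 * (3 * r + b - 7))) := by
  unfold LL
  rw [← tsum_mul_left]
  congr 1; funext m
  rw [neg_one_five, ← pow_mul, pow_zpow_eq, pow_zpow_eq, ← zpow_mul, ← zpow_add₀ h0]
  have e : q ^ (3 * tri (5 * m + r) + (b + 2) * (5 * m + r)) = q ^ (3 * tri r + (b + 2) * r) *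
      (q ^ (((25 * 3 : ℕ) : ℤ) * tri (m + 1)) * q ^ (5 * (3 * r + b - 7) * m)) := by
    rw [← zpow_add₀ h0, ← zpow_add₀ h0, tri_five, tri_succ]
    congr 1; push_cast; ring
  rw [e, show 5 * (5 * m + r) = 5 * r + ((25 : ℕ) : ℤ) * m by push_cast; ring]
  ring

lemma EE_class (h0 : q ≠ 0) (r : ℤ) :
    ∑' m : ℤ, ((-1) ^ (5 * m + r) * (q ^ 3) ^ tri (5 * m + r) * q ^ (5 * m + r)) =
      (-1) ^ r * q ^ (3 * tri r + r) * Th ((q ^ 25) ^ 3) (q ^ (5 * (7 + 3 * r))) := by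
  unfold Th
  rw [← tsum_mul_left]
  congr 1; funext m
  rw [neg_one_five, ← pow_mul, pow_zpow_eq, pow_zpow_eq, ← zpow_mul, mul_assoc, ← zpow_add₀ h0]
  have e : q ^ (((3 : ℕ) : ℤ) * tri (5 * m + r) + (5 * m + r)) = q ^ (3 * tri r + r) *
      (q ^ (((25 * 3 : ℕ) : ℤ) * tri m) * q ^ (5 * (7 + 3 * r) * m)) := by
    rw [← zpow_add₀ h0, ← zpow_add₀ h0, tri_five]
    congr 1; push_cast; ring
  rw [e]; ring

/-- The `5`-dissection of Euler's product. -/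
lemma EE_dissection (h0 : q ≠ 0) (h1 : ‖q‖ < 1) (h25 : ‖q ^ 25‖ < 1) {y Q : ℂ} (hy : y = q ^ 5)
    (hQ : Q = q ^ 25)
    (hη : Th (Q ^ 3) Q ≠ 0) (hk : kf Q 1 ≠ 0) (j1 : Th Q y ≠ 0) (j2 : Th Q (y ^ 2) ≠ 0) :
    lam Q y = y * (Th Q (y ^ 2) / Th Q y) ∧ lam Q (y ^ 2) = y ^ 2 * (Th Q y / Th Q (y ^ 2)) ∧
    EE q = Th (Q ^ 3) Q *
      (Th Q (y ^ 2) / Th Q y - q - q ^ 2 * (Th Q y / Th Q (y ^ 2))) := by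
  have hy0 : y ≠ 0 := by rw [hy]; positivity
  have hQ0 : Q ≠ 0 := by rw [hQ]; positivity
  have hQ1 : ‖Q‖ < 1 := by rw [hQ]; exact h25
  have hQy : Q = y ^ 5 := by rw [hQ, hy]; ring
  have hQ3 := cube_ne hQ0
  have j4 : Th Q ((y ^ 2) ^ 2) = Th Q y := by
    rw [← th_div hQ0 hy0, hQy]; congr 1; field_simp
  have l1 := lam_mul hQ0 hQ1 hη hk hy0 j1
  have l2 := lam_mul hQ0 hQ1 hη hk (pow_ne_zero 2 hy0) j2
  rw [j4] at l2
  have hl1 : lam Q y = y * (Th Q (y ^ 2) / Th Q y) := by field_simp; linear_combination l1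
  have hl2 : lam Q (y ^ 2) = y ^ 2 * (Th Q y / Th Q (y ^ 2)) := by
    field_simp; linear_combination l2
  refine ⟨hl1, hl2, ?_⟩
  have t7 : Th (Q ^ 3) (y ^ 8) = Th (Q ^ 3) (y ^ 7) := by
    rw [← th_div hQ3 (x := y ^ 7) (by positivity), hQy]; congr 1; field_simp
  have t13 : Th (Q ^ 3) (y ^ 2) = Th (Q ^ 3) (y ^ 13) := by
    rw [← th_div hQ3 (x := y ^ 13) (by positivity), hQy]; congr 1; field_simp
  have t4 : Th (Q ^ 3) (y ^ 11) = Th (Q ^ 3) (y ^ 4) := by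
    rw [← th_div hQ3 (x := y ^ 4) (by positivity), hQy]; congr 1; field_simp
  have t10 : Th (Q ^ 3) (y ^ 10) = Th (Q ^ 3) Q := by
    rw [← th_div hQ3 (x := Q) hQ0, hQy]; congr 1; field_simp
  have m1 : lam Q y * Th (Q ^ 3) Q = y ^ 2 * Th (Q ^ 3) (y ^ 13) + y * Th (Q ^ 3) (y ^ 7) := by
    rw [← t13, ← t7, lam, show Q * (y ^ 3)⁻¹ = y ^ 2 by rw [hQy]; field_simp,
      show Q * y ^ 3 = y ^ 8 by rw [hQy]; ring]
    field_simp
  have m2 : lam Q (y ^ 2) * Th (Q ^ 3) Q =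
      y ^ 2 * Th (Q ^ 3) (y ^ 4) - y ^ 3 * Th (Q ^ 3) y := by
    have hi := th_inv (p := Q ^ 3) hy0
    rw [← t4, lam, show Q * ((y ^ 2) ^ 3)⁻¹ = y⁻¹ by rw [hQy]; field_simp,
      show Q * (y ^ 2) ^ 3 = y ^ 11 by rw [hQy]; ring, hi]
    field_simp
    ring
  have hE := tsum_split_five (-2) (summable_th (cube_ne h0) (cube_lt h1) h0)
  simp only [EE_class h0, ← hQ] at hE
  norm_num [show tri (-2) = 3 from rfl, show tri (-1) = 1 from rfl, show tri 0 = 0 from rfl,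
    show tri 1 = 0 from rfl, show tri 2 = 1 from rfl] at hE
  rw [show q ^ 20 = y ^ 4 by rw [hy]; ring,
    show q ^ 35 = y ^ 7 by rw [hy]; ring, show q ^ 50 = y ^ 10 by rw [hy]; ring,
    show q ^ 65 = y ^ 13 by rw [hy]; ring, ← hy, t10] at hE
  have hE' : EE q = _ := hE
  rw [hE']
  rw [hl1] at m1
  rw [hl2] at m2
  apply mul_left_cancel₀ (pow_ne_zero 2 hy0)
  have e7 : q ^ 7 = q ^ 2 * y := by rw [hy]; ring
  rw [e7]
  linear_combination -y * m1 + q ^ 2 * m2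

end Dissection

/-! ### Evaluation of the rank differences -/

section Evaluation
variable {q y Q : ℂ}

/-- The `5`-dissection of `GG 1`, with the classes of `n` modulo `5` paired off by the three-term
relations. -/
lemma GG_one_eq (h0 : q ≠ 0) (h1 : ‖q‖ < 1) (hy : y = q ^ 5) (hQ : Q = q ^ 25)
    (hη : Th (Q ^ 3) Q ≠ 0) (hk : kf Q 1 ≠ 0) (j1 : Th Q y ≠ 0) (j2 : Th Q (y ^ 2) ≠ 0) :
    GG 1 q = (q ^ 9 - q ^ 3 * lam Q y + lam Q (y ^ 2)) * LL Q (y ^ 2) 1 + DD Q (y ^ 2) - DD Q y -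
      q ^ 3 * kf Q 1 / Th Q (y ^ 2) := by
  have hy0 : y ≠ 0 := by rw [hy]; positivity
  have hQ0 : Q ≠ 0 := by rw [hQ]; positivity
  have hQ1 : ‖Q‖ < 1 := by
    rw [hQ, norm_pow]; exact pow_lt_one₀ (norm_nonneg _) h1 (by norm_num)
  have hQy : Q = y ^ 5 := by rw [hQ, hy]; ring
  have e3 : y ^ 3 = Q * (y ^ 2)⁻¹ := by rw [hQy]; field_simp
  have e4 : (y ^ 2) ^ 2 = Q * y⁻¹ := by rw [hQy]; field_simp
  have j3 : Th Q (y ^ 3) = Th Q (y ^ 2) := by rw [e3, th_div hQ0 (by positivity)]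
  have j4 : Th Q ((y ^ 2) ^ 2) = Th Q y := by rw [e4, th_div hQ0 hy0]
  have ji : Th Q y⁻¹ ≠ 0 := by
    rw [th_inv hy0]; exact mul_ne_zero (by simpa using hy0) j1
  have d4 : DD Q ((y ^ 2) ^ 2) = -DD Q y := by
    rw [e4, DD_mul hQ0 hQ1 (by positivity) ji, DD_inv hQ0 hQ1 hy0 j1]; ring
  have hs := tsum_split_five 0 (summable_GG h0 h1 1)
  simp only [GG_class h0, ← hQ] at hs
  have t := lerch_three_term hQ0 hQ1 hη (ζ := y) (z := y ^ 2) hy0 (by positivity) j2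
    (by rw [← pow_succ, j3]; exact j2) (by rwa [show y ^ 2 * y⁻¹ = y by field_simp])
  rw [← pow_succ, show y ^ 2 * y⁻¹ = y by field_simp, j3] at t
  have t' : kf Q 1 * Th Q y * Th Q (y ^ 2) / (Th Q (y ^ 2) * Th Q (y ^ 2) * Th Q y) =
      kf Q 1 / Th Q (y ^ 2) := by
    generalize Th Q (y ^ 2) = a at *
    generalize Th Q y = b at *
    field_simp
  rw [t'] at t
  have d := lerch_three_term_deg hQ0 hQ1 hη hk (ζ := y ^ 2) (by positivity) j2 (by rwa [j4])
  rw [d4] at d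
  norm_num [show tri 3 = 3 from rfl, show tri 4 = 6 from rfl, show tri 0 = 0 from rfl,
    show tri 1 = 0 from rfl, show tri 2 = 1 from rfl] at hs
  have hG : GG 1 q = _ := (by unfold GG; norm_num : GG 1 q = _).trans hs
  simp only [hy, ← pow_mul, Nat.reduceMul, Nat.reduceAdd] at t d ⊢
  linear_combination hG + d - q ^ 3 * t

/-- The analogue of `GG_one_eq` for `GG 4`. -/
lemma GG_four_eq (h0 : q ≠ 0) (h1 : ‖q‖ < 1) (hy : y = q ^ 5) (hQ : Q = q ^ 25)
    (hη : Th (Q ^ 3) Q ≠ 0) (hk : kf Q 1 ≠ 0) (j1 : Th Q y ≠ 0) (j2 : Th Q (y ^ 2) ≠ 0) :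
    GG 4 q = (lam Q y - q ^ 6 - (q ^ 3)⁻¹ * lam Q (y ^ 2)) * LL Q y 1 + DD Q y + DD Q (y ^ 2) +
      q ^ 2 * kf Q 1 / Th Q y := by
  have hy0 : y ≠ 0 := by rw [hy]; positivity
  have hQ0 : Q ≠ 0 := by rw [hQ]; positivity
  have hQ1 : ‖Q‖ < 1 := by
    rw [hQ, norm_pow]; exact pow_lt_one₀ (norm_nonneg _) h1 (by norm_num)
  have hQy : Q = y ^ 5 := by rw [hQ, hy]; ring
  have e3 : y ^ 3 = Q * (y ^ 2)⁻¹ := by rw [hQy]; field_simp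
  have e4 : (y ^ 2) ^ 2 = Q * y⁻¹ := by rw [hQy]; field_simp
  have j3 : Th Q (y ^ 3) = Th Q (y ^ 2) := by rw [e3, th_div hQ0 (by positivity)]
  have j4 : Th Q ((y ^ 2) ^ 2) = Th Q y := by rw [e4, th_div hQ0 hy0]
  have ji' := th_inv (p := Q) hy0
  have ji : Th Q y⁻¹ ≠ 0 := by
    rw [th_inv hy0]; exact mul_ne_zero (by simpa using hy0) j1
  have hs := tsum_split_five (-1) (summable_GG h0 h1 4)
  simp only [GG_class h0, ← hQ] at hs
  have t := lerch_three_term hQ0 hQ1 hη (ζ := y ^ 2) (z := y) (by positivity) hy0 j1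
    (by rw [← pow_succ', j3]; exact j2) (by rwa [show y * (y ^ 2)⁻¹ = y⁻¹ by field_simp])
  rw [← pow_succ', show y * (y ^ 2)⁻¹ = y⁻¹ by field_simp, j3, j4, ji'] at t
  have t' : kf Q 1 * Th Q (y ^ 2) * Th Q y / (Th Q y * Th Q (y ^ 2) * (-y⁻¹ * Th Q y)) =
      -y * kf Q 1 / Th Q y := by
    generalize Th Q (y ^ 2) = a at *
    generalize Th Q y = b at *
    field_simp
  rw [t'] at t
  have d := lerch_three_term_deg hQ0 hQ1 hη hk (ζ := y) hy0 j1 j2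
  norm_num [show tri 3 = 3 from rfl, show tri (-1) = 1 from rfl, show tri 0 = 0 from rfl,
    show tri 1 = 0 from rfl, show tri 2 = 1 from rfl] at hs
  have hG : GG 4 q = _ := (by unfold GG; norm_num : GG 4 q = _).trans hs
  simp only [hy, ← pow_mul, Nat.reduceMul, Nat.reduceAdd] at t d ⊢
  have h3 : (q ^ 3)⁻¹ * q ^ 30 = q ^ 27 := by field_simp
  have h2 : (q ^ 3)⁻¹ * q ^ 5 = q ^ 2 := by field_simp
  linear_combination hG + d - (q ^ 3)⁻¹ * t + h3 * LL Q (q ^ 15) (q ^ 30) +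
    h2 * (kf Q 1 / Th Q (q ^ 5))

/-- The `5`-dissection of the quotient of `2 * GG 1 + GG 4` by `EE q`, that is, of the difference of
the rank classes `1` and `2`: the powers of `q` congruent to `1` and `4` modulo `5` are absent. -/
lemma two_GG_one_add (h0 : q ≠ 0) (h1 : ‖q‖ < 1) (hy : y = q ^ 5) (hQ : Q = y ^ 5)
    (hη : Th (Q ^ 3) Q ≠ 0) (hk : kf Q 1 ≠ 0) (j1 : Th Q y ≠ 0) (j2 : Th Q (y ^ 2) ≠ 0) :
    2 * GG 1 q + GG 4 q = EE q * (y * LL Q y 1 / Th (Q ^ 3) Q +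
      q ^ 2 * (kf Q 1 / (Th (Q ^ 3) Q * Th Q (y ^ 2))) +
      q ^ 3 * (-2 * y * LL Q (y ^ 2) 1 / Th (Q ^ 3) Q -
        kf Q 1 * Th Q y / (Th (Q ^ 3) Q * Th Q (y ^ 2) ^ 2))) := by
  have hy0 : y ≠ 0 := by rw [hy]; positivity
  have hQq : Q = q ^ 25 := by rw [hQ, hy]; ring
  have hQ0 : Q ≠ 0 := by rw [hQ]; positivity
  have hQ1 : ‖Q‖ < 1 := by
    rw [hQq, norm_pow]; exact pow_lt_one₀ (norm_nonneg _) h1 (by norm_num)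
  obtain ⟨l1, l2, hE⟩ := EE_dissection h0 h1 (hQq ▸ hQ1) hy hQq hη hk j1 j2
  have j4 : Th Q ((y ^ 2) ^ 2) = Th Q y := by
    rw [← th_div hQ0 hy0, hQ]; congr 1; field_simp
  have e6 : (y ^ 2) ^ 3 = Q * y := by rw [hQ]; ring
  have j6 : Th Q ((y ^ 2) ^ 3) = -y⁻¹ * Th Q y := by rw [e6, th_mul hQ0 hy0]
  have hD := DD_triple hQ0 hQ1 (a := y ^ 2) (by positivity) j2
    (by rw [j6]; exact mul_ne_zero (by simpa using hy0) j1)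
  rw [j4, j6, e6, DD_mul hQ0 hQ1 hy0 j1] at hD
  have hD' : 3 * DD Q (y ^ 2) - DD Q y = y * kf Q 1 * Th Q y ^ 2 / Th Q (y ^ 2) ^ 3 := by
    generalize Th Q (y ^ 2) = a at *
    generalize Th Q y = b at *
    generalize DD Q (y ^ 2) = c at *
    generalize DD Q y = d at *
    field_simp
    field_simp at hD
    linear_combination -hD
  rw [GG_one_eq h0 h1 hy hQq hη hk j1 j2, GG_four_eq h0 h1 hy hQq hη hk j1 j2, l1, l2, hE]
  generalize Th Q (y ^ 2) = a at *
  generalize Th Q y = b at *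
  generalize DD Q (y ^ 2) = c at *
  generalize DD Q y = d at *
  generalize Th (Q ^ 3) Q = η at *
  generalize LL Q (y ^ 2) 1 = L2 at *
  generalize LL Q y 1 = L1 at *
  generalize kf Q 1 = k at *
  have hd : d = 3 * c - y * k * b ^ 2 / a ^ 3 := by linear_combination -hD'
  rw [hd, hy]
  field_simp
  ring

/-- The `5`-dissection of the quotient of `1 + GG 1 - 2 * GG 4` by `EE q`, that is, of the difference
of the rank classes `0` and `2`: the powers of `q` congruent to `2` and `4` modulo `5` are absent. -/
lemma GG_one_sub (h0 : q ≠ 0) (h1 : ‖q‖ < 1) (hy : y = q ^ 5) (hQ : Q = y ^ 5)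
    (hη : Th (Q ^ 3) Q ≠ 0) (hk : kf Q 1 ≠ 0) (j1 : Th Q y ≠ 0) (j2 : Th Q (y ^ 2) ≠ 0) :
    1 + GG 1 q - 2 * GG 4 q = EE q * (-2 * y * LL Q y 1 / Th (Q ^ 3) Q +
        kf Q 1 * Th Q (y ^ 2) / (Th (Q ^ 3) Q * Th Q y ^ 2) +
      q * (kf Q 1 / (Th (Q ^ 3) Q * Th Q y)) +
      q ^ 3 * (-y * LL Q (y ^ 2) 1 / Th (Q ^ 3) Q)) := by
  have hy0 : y ≠ 0 := by rw [hy]; positivity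
  have hQq : Q = q ^ 25 := by rw [hQ, hy]; ring
  have hQ0 : Q ≠ 0 := by rw [hQ]; positivity
  have hQ1 : ‖Q‖ < 1 := by
    rw [hQq, norm_pow]; exact pow_lt_one₀ (norm_nonneg _) h1 (by norm_num)
  obtain ⟨l1, l2, hE⟩ := EE_dissection h0 h1 (hQq ▸ hQ1) hy hQq hη hk j1 j2
  have e3 : y ^ 3 = Q * (y ^ 2)⁻¹ := by rw [hQ]; field_simp
  have j3 : Th Q (y ^ 3) = Th Q (y ^ 2) := by rw [e3, th_div hQ0 (by positivity)]
  have ji : Th Q (y ^ 2)⁻¹ ≠ 0 := by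
    rw [th_inv (pow_ne_zero 2 hy0)]; exact mul_ne_zero (by simpa using hy0) j2
  have hD := DD_triple hQ0 hQ1 (a := y) hy0 j1 (by rwa [j3])
  rw [j3, e3, DD_mul hQ0 hQ1 (by positivity) ji, DD_inv hQ0 hQ1 (by positivity) j2] at hD
  have hD' : 3 * DD Q y + DD Q (y ^ 2) = 1 - kf Q 1 * Th Q (y ^ 2) ^ 2 / Th Q y ^ 3 := by
    generalize Th Q (y ^ 2) = a at *
    generalize Th Q y = b at *
    generalize DD Q (y ^ 2) = c at *
    generalize DD Q y = d at *
    field_simp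
    apply mul_left_cancel₀ j2
    linear_combination hD
  rw [GG_one_eq h0 h1 hy hQq hη hk j1 j2, GG_four_eq h0 h1 hy hQq hη hk j1 j2, l1, l2, hE]
  generalize Th Q (y ^ 2) = a at *
  generalize Th Q y = b at *
  generalize DD Q (y ^ 2) = c at *
  generalize DD Q y = d at *
  generalize Th (Q ^ 3) Q = η at *
  generalize LL Q (y ^ 2) 1 = L2 at *
  generalize LL Q y 1 = L1 at *
  generalize kf Q 1 = k at *
  have hc : c = 1 - k * a ^ 2 / b ^ 3 - 3 * d := by linear_combination hD'
  rw [hc, hy]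
  field_simp
  ring

end Evaluation

/-! ### Nonvanishing of theta values for small `q` -/

lemma nat_geom_bound {g : ℕ → ℂ} (hg : ∀ n, ‖g n‖ ≤ (1 / 4) ^ (n + 1)) :
    Summable g ∧ ‖∑' n, g n‖ ≤ 1 / 3 := by
  have h : HasSum (fun n : ℕ => (1 / 4 : ℝ) ^ (n + 1)) (1 / 3) := by
    have := (hasSum_geometric_of_lt_one (r := (1 / 4 : ℝ)) (by norm_num) (by norm_num)).mul_left
      (1 / 4)
    norm_num at this
    simpa [pow_succ'] using this
  exact ⟨Summable.of_norm_bounded h.summable hg, tsum_of_norm_bounded h hg⟩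

/-- A series over the integers with one term equal to `1` and geometrically small other terms does
not vanish. -/
lemma tsum_ne_zero_of_small {f : ℤ → ℂ} (c : ℤ) (hc : f c = 1)
    (hp : ∀ n : ℕ, ‖f (c + (n + 1))‖ ≤ (1 / 4) ^ (n + 1))
    (hn : ∀ n : ℕ, ‖f (c - (n + 1))‖ ≤ (1 / 4) ^ (n + 1)) : ∑' n, f n ≠ 0 := by
  obtain ⟨s1, b1⟩ := nat_geom_bound hp
  obtain ⟨s2, b2⟩ := nat_geom_bound hn
  have s3 : Summable fun n : ℕ => f (c + n) := by
    rw [← summable_nat_add_iff 1]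
    simpa using s1
  have e : ∑' n, f n = 1 + ∑' n : ℕ, f (c + (n + 1)) + ∑' n : ℕ, f (c - (n + 1)) := by
    rw [← (Equiv.addLeft c).tsum_eq]
    have := tsum_of_nat_of_neg_add_one (f := fun n => f (c + n)) s3
      (by simpa [sub_eq_add_neg] using s2)
    simp only [Equiv.coe_addLeft]
    rw [this, s3.tsum_eq_zero_add]
    simp [hc, sub_eq_add_neg]
  intro h0
  rw [h0] at e
  have h1 : (1 : ℂ) = -(∑' n : ℕ, f (c + (n + 1)) + ∑' n : ℕ, f (c - (n + 1))) := by
    linear_combination -e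
  have h2 := congrArg norm h1
  rw [norm_neg, norm_one] at h2
  have h3 := norm_add_le (∑' n : ℕ, f (c + (n + 1))) (∑' n : ℕ, f (c - (n + 1)))
  linarith

/-- For small `t` the term `n = 0`, which is `1`, dominates the series `Th (t ^ a) (t ^ b)`. -/
lemma th_ne_zero_of_small {t : ℂ} (h0 : t ≠ 0) (ht : ‖t‖ ≤ 1 / 4) {a b : ℕ} (hb : 1 ≤ b)
    (hab : b + 1 ≤ a) : Th (t ^ a) (t ^ b) ≠ 0 := by
  have hp := norm_pos_iff.2 h0
  have key : ∀ (n : ℤ) (m : ℕ), (m : ℤ) ≤ a * tri n + b * n →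
      ‖(-1) ^ n * (t ^ a) ^ tri n * (t ^ b) ^ n‖ ≤ (1 / 4) ^ m := by
    intro n m h
    rw [norm_mul, norm_mul, norm_sign, one_mul, pow_zpow_eq, pow_zpow_eq, ← norm_mul,
      ← zpow_add₀ h0, norm_zpow]
    calc ‖t‖ ^ ((a : ℤ) * tri n + b * n) ≤ ‖t‖ ^ (m : ℤ) :=
          zpow_le_zpow_right_of_le_one₀ hp (by linarith) h
      _ = ‖t‖ ^ m := zpow_natCast _ _
      _ ≤ _ := pow_le_pow_left₀ hp.le ht m
  refine tsum_ne_zero_of_small 0 (by simp [show tri 0 = 0 from rfl]) (fun n => key _ _ ?_)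
    fun n => key _ _ ?_
  · have h := two_mul_tri (0 + (n + 1))
    have h2 : 0 ≤ tri (0 + (n + 1)) := by nlinarith
    push_cast
    nlinarith [mul_nonneg (Int.natCast_nonneg a) h2]
  · have h := two_mul_tri (0 - (n + 1))
    have h2 : (n : ℤ) + 1 ≤ tri (0 - (n + 1)) := by nlinarith
    have h3 : ((b : ℤ) + 1) ≤ a := by exact_mod_cast hab
    have h4 : ((b : ℤ) + 1) * (n + 1) ≤ a * tri (0 - (n + 1)) := by
      apply mul_le_mul h3 h2 <;> positivity
    push_cast
    nlinarith

lemma kf_one_ne_zero_of_small {Q : ℂ} (h0 : Q ≠ 0) (hQ : ‖Q‖ ≤ 1 / 64) : kf Q 1 ≠ 0 := by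
  have hp := norm_pos_iff.2 h0
  have hd := (hasSum_deriv_th h0 (by linarith) one_ne_zero).neg
  rw [kf_one, ← hd.tsum_eq]
  have key : ∀ (n : ℤ) (m : ℕ), (m : ℤ) ≤ tri n →
      ‖-((-1) ^ n * Q ^ tri n * (n * 1 ^ (n - 1)))‖ ≤ |(n : ℝ)| * (1 / 64) ^ m := by
    intro n m h
    rw [norm_neg, norm_mul, norm_mul, norm_sign, one_mul, one_zpow, mul_one, norm_zpow,
      Complex.norm_intCast, mul_comm]
    refine mul_le_mul_of_nonneg_left ?_ (abs_nonneg _)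
    calc ‖Q‖ ^ tri n ≤ ‖Q‖ ^ (m : ℤ) :=
          zpow_le_zpow_right_of_le_one₀ hp (by linarith) h
      _ = ‖Q‖ ^ m := zpow_natCast _ _
      _ ≤ _ := pow_le_pow_left₀ hp.le hQ m
  refine tsum_ne_zero_of_small 1 (by simp [show tri 1 = 0 from rfl]) (fun n => ?_) fun n => ?_
  · have h := two_mul_tri (1 + (n + 1))
    refine (key _ (n + 1) (by push_cast; nlinarith)).trans ?_
    have h2 : ((n : ℝ) + 2) ≤ 16 ^ (n + 1) := by
      exact_mod_cast (Nat.lt_pow_self (n := n + 1) (a := 16) (by norm_num))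
    have e : |((1 + ((n : ℤ) + 1) : ℤ) : ℝ)| = n + 2 := by
      push_cast; rw [abs_of_nonneg (by positivity)]; ring
    rw [e]
    calc ((n : ℝ) + 2) * (1 / 64) ^ (n + 1) ≤ 16 ^ (n + 1) * (1 / 64) ^ (n + 1) := by gcongr
      _ = (1 / 4) ^ (n + 1) := by rw [← mul_pow]; norm_num
  · have h := two_mul_tri (1 - (n + 1))
    have h1 : (n : ℤ) ≤ n * n := by exact_mod_cast Nat.le_mul_self n
    refine (key _ n (by nlinarith)).trans ?_
    have h2 : (n : ℝ) * 4 ≤ 16 ^ n := by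
      have : n * 4 ≤ 16 ^ n := by
        clear h h1
        induction n with
        | zero => simp
        | succ n ih =>
          have := Nat.one_le_pow n 16 (by norm_num)
          rw [pow_succ]; omega
      exact_mod_cast this
    have e : |((1 - ((n : ℤ) + 1) : ℤ) : ℝ)| = n := by
      push_cast; rw [show (1 : ℝ) - (n + 1) = -n by ring, abs_neg, abs_of_nonneg (by positivity)]
    rw [e]
    calc (n : ℝ) * (1 / 64) ^ n = (n * 4) * (1 / 64) ^ n * (1 / 4) := by ring
      _ ≤ 16 ^ n * (1 / 64) ^ n * (1 / 4) := by gcongr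
      _ = (1 / 4) ^ (n + 1) := by rw [← mul_pow, pow_succ]; norm_num

/-- For small `q`, every denominator in the dissections is nonzero. -/
lemma nonvanishing {q y Q : ℂ} (h0 : q ≠ 0) (hq : ‖q‖ ≤ 1 / 64) (hy : y = q ^ 5) (hQ : Q = y ^ 5) :
    Th (Q ^ 3) Q ≠ 0 ∧ kf Q 1 ≠ 0 ∧ Th Q y ≠ 0 ∧ Th Q (y ^ 2) ≠ 0 := by
  have hp := norm_nonneg q
  have hy0 : y ≠ 0 := by rw [hy]; positivity
  have hQ0 : Q ≠ 0 := by rw [hQ]; positivity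
  have hy1 : ‖y‖ ≤ 1 / 64 := by
    rw [hy, norm_pow]
    exact (pow_le_of_le_one hp (by linarith) (by norm_num)).trans hq
  have hQ1 : ‖Q‖ ≤ 1 / 64 := by
    rw [hQ, norm_pow]
    exact (pow_le_of_le_one (norm_nonneg y) (by linarith) (by norm_num)).trans hy1
  refine ⟨?_, kf_one_ne_zero_of_small hQ0 hQ1, ?_, ?_⟩
  · have := th_ne_zero_of_small hQ0 (by linarith) (a := 3) (b := 1) (by norm_num) (by norm_num)
    rwa [pow_one] at this
  · have := th_ne_zero_of_small hy0 (by linarith) (a := 5) (b := 1) (by norm_num) (by norm_num)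
    rwa [pow_one, ← hQ] at this
  · have := th_ne_zero_of_small hy0 (by linarith) (a := 5) (b := 2) (by norm_num) (by norm_num)
    rwa [← hQ] at this

/-! ### Extracting coefficients from a dissection -/

lemma HasSum.congr_sum {ι : Type*} {f : ι → ℂ} {a b : ℂ} (h : HasSum f a) (e : a = b) :
    HasSum f b := e ▸ h

/-- The identity theorem for power series. -/
lemma coeff_eq_zero_of_hasSum_zero {b : ℕ → ℂ} {ε : ℝ} (hε : 0 < ε)
    (h : ∀ q : ℂ, ‖q‖ < ε → HasSum (fun n => b n * q ^ n) 0) (n : ℕ) : b n = 0 := by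
  have hp : HasFPowerSeriesAt (0 : ℂ → ℂ) (FormalMultilinearSeries.ofScalars ℂ b) 0 := by
    rw [hasFPowerSeriesAt_iff]
    filter_upwards [Metric.ball_mem_nhds (0 : ℂ) hε] with z hz
    have := h z (by simpa using hz)
    simpa [FormalMultilinearSeries.coeff_ofScalars, mul_comm] using this
  have := congrArg (fun p => FormalMultilinearSeries.coeff p n) hp.eq_zero
  simp only [FormalMultilinearSeries.coeff_ofScalars] at this
  rw [this]
  simp [FormalMultilinearSeries.coeff]

/-- A power series whose sum splits into the residue classes `0, 1, 2, 3` modulo `5` has no terms in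
the class of `4`. -/
lemma coeff_eq_zero_of_dissection {a : ℕ → ℂ} {ε : ℝ} (hε : 0 < ε) (f₀ f₁ f₂ f₃ : ℂ → ℂ)
    (h : ∀ q : ℂ, q ≠ 0 → ‖q‖ < ε → HasSum (fun n => a n * q ^ n)
      (f₀ (q ^ 5) + q * f₁ (q ^ 5) + q ^ 2 * f₂ (q ^ 5) + q ^ 3 * f₃ (q ^ 5))) (k : ℕ) :
    a (5 * k + 4) = 0 := by
  obtain ⟨ω, hω⟩ : ∃ ω : ℂ, IsPrimitiveRoot ω 5 :=
    ⟨_, Complex.isPrimitiveRoot_exp 5 (by norm_num)⟩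
  have w5 : ω ^ 5 = 1 := hω.pow_eq_one
  have w0 : ω ≠ 0 := hω.ne_zero (by norm_num)
  have wn : ‖ω‖ = 1 := hω.norm'_eq_one (by norm_num)
  have ws : 1 + ω + ω ^ 2 + ω ^ 3 + ω ^ 4 = 0 := by
    have := hω.geom_sum_eq_zero (by norm_num)
    simpa [Finset.sum_range_succ] using this
  -- `c n` is `5` if `n` is congruent to `4` modulo `5`; multiplying the coefficients of `f` by `c`
  -- gives the sum of `ω ^ i * f (ω ^ i * q)`, which is zero because no terms of class `4` occur
  set c : ℕ → ℂ := fun n => 1 + ω ^ (n + 1) + (ω ^ 2) ^ (n + 1) + (ω ^ 3) ^ (n + 1) +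
    (ω ^ 4) ^ (n + 1) with hc
  have key : ∀ q : ℂ, ‖q‖ < ε → HasSum (fun n => (c n * a n) * q ^ n) 0 := by
    intro q hq
    rcases eq_or_ne q 0 with rfl | h0
    · convert hasSum_zero with n
      rcases n with _ | n
      · simp [hc, ws]
      · simp
    have g : ∀ i : ℕ, HasSum (fun n => (ω ^ i) ^ (n + 1) * a n * q ^ n)
        (ω ^ i * (f₀ (q ^ 5) + (ω ^ i * q) * f₁ (q ^ 5) + (ω ^ i * q) ^ 2 * f₂ (q ^ 5) +
          (ω ^ i * q) ^ 3 * f₃ (q ^ 5))) := by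
      intro i
      have := (h (ω ^ i * q) (by positivity) (by simpa [wn] using hq)).mul_left (ω ^ i)
      rw [mul_pow (ω ^ i) q 5, ← pow_mul, mul_comm i 5, pow_mul, w5, one_pow, one_mul] at this
      refine this.congr_fun fun n => ?_
      rw [mul_pow, pow_succ]; ring
    have := ((((g 0).add (g 1)).add (g 2)).add (g 3)).add (g 4)
    have hv := this.congr_fun (g := fun n => c n * a n * q ^ n)
      fun n => by simp only [hc]; ring
    refine HasSum.congr_sum hv ?_
    linear_combination (f₀ (q ^ 5) * ws + q * f₁ (q ^ 5) * (ws + (ω + ω ^ 3) * w5) +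
        q ^ 2 * f₂ (q ^ 5) * (ws + (ω + ω ^ 4 + ω ^ 2 * (ω ^ 5 + 1)) * w5) +
        q ^ 3 * f₃ (q ^ 5) * (ws + (ω ^ 3 + ω ^ 2 * (ω ^ 5 + 1) + ω * (ω ^ 10 + ω ^ 5 + 1)) * w5))
  have h1 := coeff_eq_zero_of_hasSum_zero hε key (5 * k + 4)
  have h2 : c (5 * k + 4) = 5 := by
    have e : ∀ i : ℕ, (ω ^ i) ^ (5 * k + 4 + 1) = 1 := fun i => by
      rw [← pow_mul, show i * (5 * k + 4 + 1) = 5 * (i * (k + 1)) by ring, pow_mul, w5, one_pow]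
    have e1 := e 1
    rw [pow_one] at e1
    simp only [hc, e, e1]
    norm_num
  rw [h2] at h1
  simpa using h1

/-! ### Partitions as multisets and Dyson's adjoint -/

/-- Partitions of arbitrary size, as multisets of positive integers. -/
abbrev Ptn : Type := {s : Multiset ℕ // 0 ∉ s}

namespace Ptn

/-- The number that is partitioned. -/
def size (s : Ptn) : ℕ := s.1.sum

/-- The rank: the largest part minus the number of parts. -/
def rk (s : Ptn) : ℤ := (s.1.sup : ℤ) - (s.1.card : ℤ)

/-- Subtracting `1` from every part and discarding the zeros that arise, that is, deleting the first
column of the Young diagram. -/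
def cut (s : Multiset ℕ) : Multiset ℕ := (s.map Nat.pred).filter (· ≠ 0)

lemma cut_cons (a : ℕ) (s : Multiset ℕ) :
    cut (a ::ₘ s) = if a - 1 = 0 then cut s else (a - 1) ::ₘ cut s := by
  unfold cut
  rw [Multiset.map_cons, Multiset.filter_cons]
  split_ifs with h1 h2 h2 <;> simp_all

lemma cut_facts (s : Multiset ℕ) (hs : 0 ∉ s) :
    (cut s).card ≤ s.card ∧ (cut s).sup = s.sup - 1 ∧ s.sum = (cut s).sum + s.card ∧
      (cut s).map Nat.succ + Multiset.replicate (s.card - (cut s).card) 1 = s := by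
  induction s using Multiset.induction_on with
  | empty => simp [cut]
  | cons a s ih =>
    rw [Multiset.mem_cons, not_or] at hs
    obtain ⟨i1, i2, i3, i4⟩ := ih hs.2
    have ha : 0 < a := Nat.pos_of_ne_zero fun h => hs.1 h.symm
    rw [cut_cons]
    split_ifs with h
    · obtain rfl : a = 1 := by omega
      refine ⟨by simp; omega, ?_, ?_, ?_⟩
      · rw [Multiset.sup_cons, i2]; omega
      · simp only [Multiset.sum_cons, Multiset.card_cons]; omega
      · rw [Multiset.card_cons, Nat.succ_sub i1, Multiset.replicate_succ, Multiset.add_cons, i4]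
    · refine ⟨by simp; omega, ?_, ?_, ?_⟩
      · rw [Multiset.sup_cons, Multiset.sup_cons, i2]; omega
      · simp only [Multiset.sum_cons, Multiset.card_cons]; omega
      · rw [Multiset.card_cons, Multiset.card_cons, Nat.add_sub_add_right, Multiset.map_cons,
          Multiset.cons_add, i4]
        congr 1
        show a - 1 + 1 = a
        omega

/-- Removal of the first column: the remaining partition and the number of parts. -/
def col (s : Ptn) : Ptn × ℕ := (⟨cut s.1, by simp [cut]⟩, s.1.card)

lemma col_injective : Function.Injective col := by
  intro s t h
  have h1 : cut s.1 = cut t.1 := congrArg (fun x : Ptn × ℕ => x.1.1) h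
  have h2 : s.1.card = t.1.card := congrArg (fun x : Ptn × ℕ => x.2) h
  apply Subtype.ext
  rw [← (cut_facts s.1 s.2).2.2.2, ← (cut_facts t.1 t.2).2.2.2, h1, h2]

/-- A column can be put in front of a partition if it is at least as long as the number of parts. -/
lemma mem_range_col {x : Ptn × ℕ} (h : x.1.1.card ≤ x.2) : x ∈ Set.range col := by
  obtain ⟨⟨κ, hκ⟩, l⟩ := x
  have e : cut (κ.map Nat.succ + Multiset.replicate (l - κ.card) 1) = κ := by
    simp only [cut, Multiset.map_add, Multiset.map_map, Multiset.map_replicate,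
      Multiset.filter_add, Function.comp_def, Nat.pred_succ, Multiset.map_id']
    rw [Multiset.filter_eq_self.2 (fun a ha => by rintro rfl; exact hκ ha),
      Multiset.filter_eq_nil.2 (fun a ha => by simp [Multiset.eq_of_mem_replicate ha]), add_zero]
  refine ⟨⟨κ.map Nat.succ + Multiset.replicate (l - κ.card) 1, ?_⟩, ?_⟩
  · simp [Multiset.mem_replicate]
  · refine Prod.ext (Subtype.ext e) ?_
    simp only [col, Multiset.card_add, Multiset.card_map, Multiset.card_replicate]
    simp only at h
    omega

lemma sup_mem {s : Multiset ℕ} (hs : s ≠ 0) : s.sup ∈ s := by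
  induction s using Multiset.induction_on with
  | empty => exact absurd rfl hs
  | cons a s ih =>
    rw [Multiset.sup_cons]
    rcases eq_or_ne s 0 with rfl | h
    · simp
    · rcases le_total a s.sup with h1 | h1
      · rw [sup_eq_right.2 h1]; exact Multiset.mem_cons_of_mem (ih h)
      · rw [sup_eq_left.2 h1]; exact Multiset.mem_cons_self _ _

lemma sup_pos (s : Ptn) (hs : s.1 ≠ 0) : 0 < s.1.sup :=
  Nat.pos_of_ne_zero fun h => s.2 (by have := sup_mem hs; rwa [h] at this)

/-- Removal of the first row: the remaining partition and the largest part. -/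
def row (s : Ptn) : Ptn × ℕ :=
  (⟨s.1.erase s.1.sup, fun h => s.2 (Multiset.mem_of_mem_erase h)⟩, s.1.sup)

lemma eq_zero_of_sup (s : Ptn) (h : s.1.sup = 0) : s.1 = 0 := by
  by_contra hs
  exact (sup_pos s hs).ne' h

lemma row_injective : Function.Injective row := by
  intro s t h
  have h1 : s.1.erase s.1.sup = t.1.erase t.1.sup := congrArg (fun x : Ptn × ℕ => x.1.1) h
  have h2 : s.1.sup = t.1.sup := congrArg (fun x : Ptn × ℕ => x.2) h
  apply Subtype.ext
  rcases eq_or_ne s.1 0 with hs | hs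
  · rw [hs, eq_zero_of_sup t (by rw [← h2, hs]; rfl)]
  · have ht : t.1 ≠ 0 := fun ht => (sup_pos s hs).ne' (by rw [h2, ht]; rfl)
    rw [← Multiset.cons_erase (sup_mem hs), ← Multiset.cons_erase (sup_mem ht), h1, h2]

/-- A row can be put on top of a partition if it is at least as long as the largest part. -/
lemma mem_range_row {x : Ptn × ℕ} (h : x.1.1.sup ≤ x.2) : x ∈ Set.range row := by
  obtain ⟨κ, b⟩ := x
  simp only at h
  rcases Nat.eq_zero_or_pos b with rfl | hb
  · have hκ : κ.1 = 0 := eq_zero_of_sup κ (by omega)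
    refine ⟨⟨0, by simp⟩, Prod.ext (Subtype.ext ?_) ?_⟩
    · rw [hκ]; rfl
    · rfl
  · have e : (b ::ₘ κ.1).sup = b := by rw [Multiset.sup_cons]; exact sup_eq_left.2 h
    refine ⟨⟨b ::ₘ κ.1, ?_⟩, Prod.ext (Subtype.ext ?_) e⟩
    · rw [Multiset.mem_cons, not_or]; exact ⟨hb.ne, κ.2⟩
    · show (b ::ₘ κ.1).erase (b ::ₘ κ.1).sup = κ.1
      rw [e, Multiset.erase_cons_head]

lemma row_facts (s : Ptn) (hs : s.1 ≠ 0) :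
    s.size = (row s).1.size + (row s).2 ∧ s.1.card = (row s).1.1.card + 1 ∧
      (row s).1.1.sup ≤ (row s).2 := by
  have h := Multiset.cons_erase (sup_mem hs)
  refine ⟨?_, ?_, ?_⟩
  · have := congrArg Multiset.sum h
    rw [Multiset.sum_cons] at this
    simp only [size, row]; omega
  · have := congrArg Multiset.card h
    rw [Multiset.card_cons] at this
    exact this.symm
  · exact Multiset.sup_le.2 fun b hb => Multiset.le_sup (Multiset.mem_of_mem_erase hb)

lemma tsum_col (F : Ptn × ℕ → ℂ) (hF : ∀ x, F x ≠ 0 → x.1.1.card ≤ x.2) :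
    ∑' s, F (col s) = ∑' x, F x :=
  col_injective.tsum_eq fun x hx => mem_range_col (hF x hx)

lemma tsum_row (F : Ptn × ℕ → ℂ) (hF : ∀ x, F x ≠ 0 → x.1.1.sup ≤ x.2) :
    ∑' s, F (row s) = ∑' x, F x :=
  row_injective.tsum_eq fun x hx => mem_range_row (hF x hx)

lemma tsum_shift (r : ℕ) (F : Ptn × ℕ → ℂ) (hF : ∀ x, F x ≠ 0 → r ≤ x.2) :
    ∑' x : Ptn × ℕ, F (x.1, x.2 + r) = ∑' x, F x := by
  refine Function.Injective.tsum_eq (g := fun x : Ptn × ℕ => (x.1, x.2 + r)) ?_ fun x hx => ?_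
  · rintro ⟨a, b⟩ ⟨c, d⟩ h
    simpa using h
  · exact ⟨(x.1, x.2 - r), Prod.ext rfl (Nat.sub_add_cancel (hF x hx))⟩

/-- Dyson's adjoint: replacing the first column, of length `l`, by a first row of length `l + r`
matches partitions of rank at most `r + 1` with nonempty partitions of rank at least `r - 1`. -/
lemma adjoint_ge (q : ℂ) {r : ℕ} (hr : 1 ≤ r) :
    ∑' s : Ptn, (if (r : ℤ) - 1 ≤ s.rk ∧ s.1 ≠ 0 then q ^ s.size else 0) =
      q ^ r * ∑' s : Ptn, if s.rk ≤ r + 1 then q ^ s.size else 0 := by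
  set F : Ptn × ℕ → ℂ := fun x =>
    if x.1.1.sup ≤ x.2 ∧ x.1.1.card + r ≤ x.2 then q ^ (x.1.size + x.2) else 0 with hF
  have h1 := tsum_row F fun x hx => (ite_ne_right_iff.1 hx).1.1
  have h2 := tsum_shift r F fun x hx => by have := (ite_ne_right_iff.1 hx).1.2; omega
  have h3 := tsum_col (fun x => F (x.1, x.2 + r)) fun x hx => by
    have := (ite_ne_right_iff.1 hx).1.2; simp only at this; omega
  rw [← tsum_mul_left]
  refine (tsum_congr fun s => ?_).trans ((h1.trans (h2.symm.trans h3.symm)).trans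
    (tsum_congr fun s => ?_))
  · simp only [hF]
    by_cases hs : s.1 = 0
    · rw [if_neg (by tauto), if_neg]
      have : (row s).2 = 0 := by simp [row, hs]
      omega
    · obtain ⟨e1, e2, e3⟩ := row_facts s hs
      rw [e1]
      refine if_congr ?_ rfl rfl
      have : s.1.sup = (row s).2 := rfl
      simp only [rk]
      constructor
      · rintro ⟨h, -⟩; omega
      · rintro ⟨-, h⟩; exact ⟨by omega, hs⟩
  · obtain ⟨e1, e2, e3, -⟩ := cut_facts s.1 s.2
    simp only [hF, mul_ite, mul_zero]
    have e4 : s.size = (col s).1.size + (col s).2 := e3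
    rw [e4, ← pow_add]
    refine if_congr ?_ (by congr 1; omega) rfl
    show (cut s.1).sup ≤ s.1.card + r ∧ (cut s.1).card + r ≤ s.1.card + r ↔ _
    rw [e2, rk]
    by_cases hs : s.1 = 0
    · simp [hs, cut]; omega
    · have := Multiset.card_pos.2 hs
      have := sup_pos s hs
      omega

/-- The conjugate of the construction in `adjoint_ge`: replacing the first row, of length `b`, by a
first column of length `b + r` matches partitions of rank at least `-r - 1` with nonempty partitions
of rank at most `1 - r`. -/
lemma adjoint_le (q : ℂ) {r : ℕ} (hr : 1 ≤ r) :
    ∑' s : Ptn, (if s.rk ≤ 1 - r ∧ s.1 ≠ 0 then q ^ s.size else 0) =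
      q ^ r * ∑' s : Ptn, if -(r : ℤ) - 1 ≤ s.rk then q ^ s.size else 0 := by
  set F : Ptn × ℕ → ℂ := fun x =>
    if x.1.1.card ≤ x.2 ∧ x.1.1.sup + r ≤ x.2 then q ^ (x.1.size + x.2) else 0 with hF
  have h1 := tsum_col F fun x hx => (ite_ne_right_iff.1 hx).1.1
  have h2 := tsum_shift r F fun x hx => by have := (ite_ne_right_iff.1 hx).1.2; omega
  have h3 := tsum_row (fun x => F (x.1, x.2 + r)) fun x hx => by
    have := (ite_ne_right_iff.1 hx).1.2; simp only at this; omega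
  rw [← tsum_mul_left]
  refine (tsum_congr fun s => ?_).trans ((h1.trans (h2.symm.trans h3.symm)).trans
    (tsum_congr fun s => ?_))
  · simp only [hF]
    obtain ⟨e1, e2, e3, -⟩ := cut_facts s.1 s.2
    have e4 : s.size = (col s).1.size + (col s).2 := e3
    rw [e4]
    refine if_congr ?_ rfl rfl
    show _ ↔ (cut s.1).card ≤ s.1.card ∧ (cut s.1).sup + r ≤ s.1.card
    rw [e2, rk]
    by_cases hs : s.1 = 0
    · simp [hs]; omega
    · have := Multiset.card_pos.2 hs
      have := sup_pos s hs
      constructor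
      · rintro ⟨h, -⟩; omega
      · rintro ⟨-, h⟩; exact ⟨by omega, hs⟩
  · simp only [hF, mul_ite, mul_zero]
    by_cases hs : s.1 = 0
    · have e : s = ⟨0, by simp⟩ := Subtype.ext hs
      subst e
      simp [row, rk, size]
    · obtain ⟨e1, e2, e3⟩ := row_facts s hs
      rw [e1, ← pow_add]
      refine if_congr ?_ (by congr 1; omega) rfl
      have : s.1.sup = (row s).2 := rfl
      simp only [rk]
      omega

/-- A `Ptn` is the same as a size together with a partition of that size. -/
def equivSigma : (Σ n : ℕ, n.Partition) ≃ Ptn where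
  toFun x := ⟨x.2.parts, fun h => (x.2.parts_pos h).ne rfl⟩
  invFun s := ⟨s.size, ⟨s.1, fun {i} hi => Nat.pos_of_ne_zero fun h => s.2 (h ▸ hi), rfl⟩⟩
  left_inv := by
    rintro ⟨n, ⟨p, hp, rfl⟩⟩
    rfl
  right_inv s := rfl

lemma size_equivSigma (x : Σ n : ℕ, n.Partition) : (equivSigma x).size = x.1 := x.2.parts_sum

lemma card_partition_le (n : ℕ) : Fintype.card n.Partition ≤ 2 ^ n :=
  calc Fintype.card n.Partition ≤ Fintype.card (Composition n) :=
        Fintype.card_le_of_surjective _ Nat.Partition.ofComposition_surj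
    _ = 2 ^ (n - 1) := composition_card n
    _ ≤ 2 ^ n := Nat.pow_le_pow_right (by norm_num) (by omega)

lemma summable_size {t : ℝ} (h0 : 0 ≤ t) (ht : t ≤ 1 / 64) :
    Summable fun s : Ptn => t ^ s.size := by
  rw [← equivSigma.summable_iff]
  simp only [Function.comp_def, size_equivSigma]
  rw [summable_sigma_of_nonneg fun x => by positivity]
  refine ⟨fun n => (hasSum_fintype _).summable, ?_⟩
  refine Summable.of_nonneg_of_le (fun n => tsum_nonneg fun _ => by positivity) (fun n => ?_)
    (summable_geometric_of_lt_one (r := 2 * t) (by positivity) (by linarith))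
  show ∑' _ : n.Partition, t ^ n ≤ (2 * t) ^ n
  rw [tsum_fintype, Finset.sum_const, nsmul_eq_mul, mul_pow, Finset.card_univ]
  gcongr
  exact_mod_cast card_partition_le n

end Ptn

/-! ### Generating functions of partitions with bounded rank -/

section RankSeries
variable {q : ℂ}

/-- The generating function of all partitions. -/
noncomputable def PP (q : ℂ) : ℂ := ∑' s : Ptn, q ^ s.size

/-- The generating function of the partitions of rank at least `m`. -/
noncomputable def av (q : ℂ) (m : ℤ) : ℂ := ∑' s : Ptn, if m ≤ s.rk then q ^ s.size else 0

/-- The generating function of the partitions of rank at most `-m`. -/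
noncomputable def bv (q : ℂ) (m : ℤ) : ℂ := ∑' s : Ptn, if s.rk ≤ -m then q ^ s.size else 0

lemma norm_ite_le (p : Prop) [Decidable p] (s : Ptn) :
    ‖if p then q ^ s.size else 0‖ ≤ ‖q‖ ^ s.size := by
  split_ifs
  · rw [norm_pow]
  · rw [norm_zero]; positivity

lemma summable_ite (hq : ‖q‖ ≤ 1 / 64) (p : Ptn → Prop) [DecidablePred p] :
    Summable fun s : Ptn => if p s then q ^ s.size else 0 :=
  Summable.of_norm_bounded (Ptn.summable_size (norm_nonneg q) hq) fun s => norm_ite_le _ s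

lemma summable_all (hq : ‖q‖ ≤ 1 / 64) : Summable fun s : Ptn => q ^ s.size :=
  Summable.of_norm_bounded (Ptn.summable_size (norm_nonneg q) hq) fun s => by rw [norm_pow]

lemma tsum_ite_not (hq : ‖q‖ ≤ 1 / 64) (p r : Ptn → Prop) [DecidablePred p] [DecidablePred r]
    (h : ∀ s, r s ↔ ¬p s) : (∑' s : Ptn, if r s then q ^ s.size else 0) =
      PP q - ∑' s : Ptn, if p s then q ^ s.size else 0 := by
  rw [PP, ← (summable_all hq).tsum_sub (summable_ite hq p)]
  refine tsum_congr fun s => ?_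
  by_cases hp : p s <;> simp [h, hp]

lemma Ptn.rk_zero {s : Ptn} (h : s.1 = 0) : s.rk = 0 := by simp [Ptn.rk, h]

lemma av_rec (hq : ‖q‖ ≤ 1 / 64) {m : ℕ} (hm : 1 ≤ m) :
    av q m = q ^ (m + 1) * (PP q - av q (m + 3)) := by
  have h := Ptn.adjoint_ge q (r := m + 1) (by omega)
  rw [tsum_ite_not hq (fun s => (m : ℤ) + 3 ≤ s.rk) (fun s => s.rk ≤ ((m + 1 : ℕ) : ℤ) + 1)
    fun s => by push_cast; omega] at h
  rw [av, av, ← h]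
  refine tsum_congr fun s => if_congr ?_ rfl rfl
  have := @Ptn.rk_zero s
  push_cast
  constructor
  · intro h1; exact ⟨by omega, fun h2 => by have := this h2; omega⟩
  · rintro ⟨h1, -⟩; omega

lemma av_zero (hq : ‖q‖ ≤ 1 / 64) : av q 0 = 1 + q * (PP q - av q 3) := by
  have h := Ptn.adjoint_ge q (r := 1) le_rfl
  rw [tsum_ite_not hq (fun s => (3 : ℤ) ≤ s.rk) (fun s => s.rk ≤ ((1 : ℕ) : ℤ) + 1)
    fun s => by push_cast; omega, pow_one] at h
  have h1 : (1 : ℂ) = ∑' s : Ptn, if s = ⟨0, by simp⟩ then 1 else 0 :=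
    (tsum_ite_eq _ fun _ => (1 : ℂ)).symm
  have hs : Summable fun s : Ptn => if s = ⟨0, by simp⟩ then (1 : ℂ) else 0 :=
    (hasSum_ite_eq _ _).summable
  rw [av, av, ← h, h1, ← hs.tsum_add (summable_ite hq _)]
  refine tsum_congr fun s => ?_
  by_cases h0 : s = ⟨0, by simp⟩
  · subst h0; simp [Ptn.rk, Ptn.size]
  · have : s.1 ≠ 0 := fun h => h0 (Subtype.ext h)
    simp [h0, this]

lemma bv_rec (hq : ‖q‖ ≤ 1 / 64) {m : ℕ} (hm : 1 ≤ m) :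
    bv q m = q ^ (m + 1) * (PP q - bv q (m + 3)) := by
  have h := Ptn.adjoint_le q (r := m + 1) (by omega)
  rw [tsum_ite_not hq (fun s => s.rk ≤ -((m : ℤ) + 3))
    (fun s => -((m + 1 : ℕ) : ℤ) - 1 ≤ s.rk) fun s => by push_cast; omega] at h
  rw [bv, bv, ← h]
  refine tsum_congr fun s => if_congr ?_ rfl rfl
  have := @Ptn.rk_zero s
  push_cast
  constructor
  · intro h1; exact ⟨by omega, fun h2 => by have := this h2; omega⟩
  · rintro ⟨h1, -⟩; omega

lemma PP_eq (hq : ‖q‖ ≤ 1 / 64) : PP q = av q 0 + bv q 1 := by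
  have := tsum_ite_not hq (fun s => (0 : ℤ) ≤ s.rk) (fun s => s.rk ≤ -1) fun s => by omega
  rw [av, bv, this]; ring

/-- The term `(-1)ⁿ q^(n(3n-1)/2 + cn)`; for `c = 0` it is that of the pentagonal series. -/
noncomputable def UU (q : ℂ) (c n : ℤ) : ℂ := (-1) ^ n * q ^ (3 * tri n + (1 + c) * n)

/-- The sum of `UU q c n` over the positive integers `n`. -/
noncomputable def TT (q : ℂ) (c : ℤ) : ℂ := ∑' n : ℕ, UU q c (n + 1)

lemma summable_UU (h0 : q ≠ 0) (hq : ‖q‖ ≤ 1 / 64) (c : ℤ) : Summable (UU q c) := by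
  refine (summable_th (cube_ne h0) (cube_lt (by linarith)) (zpow_ne_zero (1 + c) h0)).congr
    fun n => ?_
  have e : q ^ (3 * tri n + (1 + c) * n) = (q ^ 3) ^ tri n * (q ^ (1 + c)) ^ n := by
    rw [pow_zpow_eq, ← zpow_mul, ← zpow_add₀ h0]; norm_cast
  rw [UU, e]; ring

lemma natCast_succ_injective : Function.Injective fun n : ℕ => (n : ℤ) + 1 := fun a b h => by
  simpa using h

lemma summable_UU_nat (h0 : q ≠ 0) (hq : ‖q‖ ≤ 1 / 64) (c : ℤ) :
    Summable fun n : ℕ => UU q c n :=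
  (summable_UU h0 hq c).comp_injective Nat.cast_injective

lemma UU_zero (c : ℤ) : UU q c 0 = 1 := by simp [UU, show tri 0 = 0 from rfl]

lemma TT_rec (h0 : q ≠ 0) (hq : ‖q‖ ≤ 1 / 64) (c : ℤ) :
    TT q c = -q ^ (c + 1) * (1 + TT q (c + 3)) := by
  have h : ∀ n : ℕ, UU q c (n + 1) = -q ^ (c + 1) * UU q (c + 3) n := fun n => by
    rw [UU, UU, neg_one_zpow_succ, tri_succ,
      show 3 * (tri n + n) + (1 + c) * ((n : ℤ) + 1) =
        (c + 1) + (3 * tri n + (1 + (c + 3)) * n) by ring, zpow_add₀ h0 (c + 1)]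
    ring
  rw [TT, tsum_congr h, tsum_mul_left, (summable_UU_nat h0 hq _).tsum_eq_zero_add, TT]
  simp [UU_zero]

lemma norm_UU_le (h0 : q ≠ 0) (hq : ‖q‖ ≤ 1 / 64) {c : ℤ} (hc : 0 ≤ c) (n : ℕ) :
    ‖UU q c (n + 1)‖ ≤ (1 / 4) ^ (n + 1) * ‖q ^ c‖ := by
  have hp := norm_pos_iff.2 h0
  have h := two_mul_tri (n + 1)
  rw [UU, norm_mul, norm_sign, one_mul, norm_zpow, norm_zpow]
  have h1 : ((n + 1 : ℕ) : ℤ) + c ≤ 3 * tri (n + 1) + (1 + c) * (n + 1) := by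
    push_cast; nlinarith
  calc ‖q‖ ^ (3 * tri (n + 1) + (1 + c) * ((n : ℤ) + 1)) ≤ ‖q‖ ^ (((n + 1 : ℕ) : ℤ) + c) :=
        zpow_le_zpow_right_of_le_one₀ hp (by linarith) h1
    _ = ‖q‖ ^ (n + 1) * ‖q‖ ^ c := by rw [zpow_add₀ hp.ne', zpow_natCast]
    _ ≤ (1 / 4) ^ (n + 1) * ‖q‖ ^ c := by gcongr; linarith

lemma norm_TT_le (h0 : q ≠ 0) (hq : ‖q‖ ≤ 1 / 64) {c : ℤ} (hc : 0 ≤ c) : ‖TT q c‖ ≤ 1 := by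
  refine (nat_geom_bound fun n => (norm_UU_le h0 hq hc n).trans ?_).2.trans (by norm_num)
  refine mul_le_of_le_one_right (by positivity) ?_
  rw [norm_zpow]
  exact zpow_le_one₀ (norm_pos_iff.2 h0) (by linarith) hc

/-- A bounded solution of the homogeneous recursion vanishes, because iterating the recursion
multiplies the bound by `1 / 64` each time. -/
lemma eq_zero_of_rec (hq : ‖q‖ ≤ 1 / 64) {d : ℕ → ℂ} {C : ℝ} (hd : ∀ m, ‖d m‖ ≤ C)
    (h : ∀ m, 1 ≤ m → d m = -q ^ (m + 1) * d (m + 3)) {m : ℕ} (hm : 1 ≤ m) : d m = 0 := by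
  have hC : 0 ≤ C := (norm_nonneg _).trans (hd 0)
  have key : ∀ k m : ℕ, 1 ≤ m → ‖d m‖ ≤ C * (1 / 64) ^ k := by
    intro k
    induction k with
    | zero => intro m _; simpa using hd m
    | succ k ih =>
      intro m hm
      rw [h m hm, norm_mul, norm_neg, norm_pow]
      have h1 : ‖q‖ ^ (m + 1) ≤ 1 / 64 :=
        (pow_le_of_le_one (norm_nonneg q) (by linarith) (by omega)).trans hq
      calc ‖q‖ ^ (m + 1) * ‖d (m + 3)‖ ≤ 1 / 64 * (C * (1 / 64) ^ k) := by
            gcongr; exact ih _ (by omega)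
        _ = _ := by ring
  have ht : Tendsto (fun k : ℕ => C * (1 / 64 : ℝ) ^ k) atTop (𝓝 (C * 0)) :=
    (tendsto_pow_atTop_nhds_zero_of_lt_one (by norm_num) (by norm_num)).const_mul C
  rw [mul_zero] at ht
  exact norm_le_zero_iff.1 (ge_of_tendsto' ht fun k => key k m hm)

lemma eq_neg_PP_mul (h0 : q ≠ 0) (hq : ‖q‖ ≤ 1 / 64) {f : ℤ → ℂ}
    {C : ℝ} (hf : ∀ m, ‖f m‖ ≤ C)
    (h : ∀ m : ℕ, 1 ≤ m → f m = q ^ (m + 1) * (PP q - f (m + 3))) {m : ℕ} (hm : 1 ≤ m) :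
    f m = -(PP q * TT q m) := by
  have := eq_zero_of_rec hq (d := fun m : ℕ => f m + PP q * TT q m) (C := C + ‖PP q‖ * 1)
    (fun m => (norm_add_le _ _).trans (add_le_add (hf m) ?_)) (fun m hm => ?_) hm
  · linear_combination this
  · rw [norm_mul]
    exact mul_le_mul_of_nonneg_left (norm_TT_le h0 hq (by positivity)) (norm_nonneg _)
  · have e : q ^ ((m : ℤ) + 1) = q ^ (m + 1) := by rw [← zpow_natCast]; norm_cast
    rw [h m hm, TT_rec h0 hq m, e]
    push_cast
    ring

lemma norm_tsum_ite_le (hq : ‖q‖ ≤ 1 / 64) (p : Ptn → Prop) [DecidablePred p] :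
    ‖∑' s : Ptn, if p s then q ^ s.size else 0‖ ≤ ∑' s : Ptn, ‖q‖ ^ s.size :=
  tsum_of_norm_bounded (Ptn.summable_size (norm_nonneg q) hq).hasSum fun s => norm_ite_le _ s

lemma av_eq (h0 : q ≠ 0) (hq : ‖q‖ ≤ 1 / 64) {m : ℕ} (hm : 1 ≤ m) :
    av q m = -(PP q * TT q m) :=
  eq_neg_PP_mul h0 hq (f := av q) (fun m => norm_tsum_ite_le hq fun s => m ≤ s.rk)
    (fun _ hm => av_rec hq hm) hm

lemma bv_eq (h0 : q ≠ 0) (hq : ‖q‖ ≤ 1 / 64) {m : ℕ} (hm : 1 ≤ m) :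
    bv q m = -(PP q * TT q m) :=
  eq_neg_PP_mul h0 hq (f := bv q) (fun m => norm_tsum_ite_le hq fun s => s.rk ≤ -m)
    (fun _ hm => bv_rec hq hm) hm

lemma tsum_int_split {f : ℤ → ℂ} (hf : Summable f) :
    ∑' n, f n = f 0 + ∑' n : ℕ, f (n + 1) + ∑' n : ℕ, f (-(n + 1)) := by
  have h1 : Summable fun n : ℕ => f n := hf.comp_injective Nat.cast_injective
  have h2 : Summable fun n : ℕ => f (-((n : ℤ) + 1)) :=
    hf.comp_injective (neg_injective.comp natCast_succ_injective)
  rw [tsum_of_nat_of_neg_add_one h1 h2, h1.tsum_eq_zero_add]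
  simp

lemma EE_eq (h0 : q ≠ 0) (hq : ‖q‖ ≤ 1 / 64) : EE q = 1 + TT q 0 + TT q 1 := by
  have h := tsum_int_split (summable_UU h0 hq 0)
  have e : ∑' n : ℤ, UU q 0 n = EE q := by
    unfold EE Th
    refine tsum_congr fun n => ?_
    rw [UU, zpow_add₀ h0, pow_zpow_eq]; push_cast; ring_nf
  rw [← e, h, UU_zero, TT, TT]
  congr 1
  refine tsum_congr fun n => ?_
  rw [UU, UU, neg_one_zpow_neg, tri_neg]
  ring_nf

/-- Euler's pentagonal number theorem: every partition has rank at least `0` or at most `-1`, and both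
kinds are counted by the series `TT`. -/
lemma PP_mul_EE (h0 : q ≠ 0) (hq : ‖q‖ ≤ 1 / 64) : PP q * EE q = 1 := by
  have h1 := PP_eq hq
  have h2 := bv_eq h0 hq (m := 1) le_rfl
  have h3 := av_eq h0 hq (m := 3) (by norm_num)
  have h4 := TT_rec h0 hq 0
  rw [av_zero hq] at h1
  norm_num at h2 h3 h4
  rw [EE_eq h0 hq]
  linear_combination h1 + h2 - q * h3 + PP q * h4

end RankSeries

/-! ### Generating functions of the rank classes modulo `5` -/

section RankClasses
variable {q : ℂ}

/-- The generating function of the partitions of rank `j`. -/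
noncomputable def RR (q : ℂ) (j : ℤ) : ℂ := ∑' s : Ptn, if s.rk = j then q ^ s.size else 0

lemma RR_natCast (h0 : q ≠ 0) (hq : ‖q‖ ≤ 1 / 64) {m : ℕ} (hm : 1 ≤ m) :
    RR q m = PP q * (TT q (m + 1) - TT q m) := by
  have h : av q m = RR q m + av q (m + 1 : ℕ) := by
    rw [av, RR, av, ← (summable_ite hq _).tsum_add (summable_ite hq _)]
    refine tsum_congr fun s => ?_
    rcases lt_trichotomy (m : ℤ) s.rk with h | h | h
    · simp [h.le, h.ne', show (m : ℤ) + 1 ≤ s.rk by omega]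
    · simp [← h]
    · simp [h.not_ge, h.ne, show ¬(m : ℤ) + 1 ≤ s.rk by omega]
  rw [av_eq h0 hq hm, av_eq h0 hq (by omega : 1 ≤ m + 1)] at h
  push_cast at h
  linear_combination -h

lemma RR_neg_natCast (h0 : q ≠ 0) (hq : ‖q‖ ≤ 1 / 64) {m : ℕ} (hm : 1 ≤ m) :
    RR q (-m) = PP q * (TT q (m + 1) - TT q m) := by
  have h : bv q m = RR q (-m) + bv q (m + 1 : ℕ) := by
    rw [bv, RR, bv, ← (summable_ite hq _).tsum_add (summable_ite hq _)]
    refine tsum_congr fun s => ?_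
    rcases lt_trichotomy s.rk (-(m : ℤ)) with h | h | h
    · rw [if_pos h.le, if_neg h.ne, if_pos (by push_cast; omega), zero_add]
    · rw [if_pos h.le, if_pos h, if_neg (by push_cast; omega), add_zero]
    · rw [if_neg h.not_ge, if_neg h.ne', if_neg (by push_cast; omega), zero_add]
  rw [bv_eq h0 hq hm, bv_eq h0 hq (by omega : 1 ≤ m + 1)] at h
  push_cast at h
  linear_combination -h

lemma RR_zero (h0 : q ≠ 0) (hq : ‖q‖ ≤ 1 / 64) : RR q 0 = PP q * (1 + 2 * TT q 1) := by
  have h : av q 0 = RR q 0 + av q (1 : ℕ) := by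
    rw [av, RR, av, ← (summable_ite hq _).tsum_add (summable_ite hq _)]
    refine tsum_congr fun s => ?_
    rcases lt_trichotomy (0 : ℤ) s.rk with h | h | h
    · simp [h.le, h.ne', show (1 : ℤ) ≤ s.rk by omega]
    · simp [← h]
    · simp [h.not_ge, h.ne, show ¬(1 : ℤ) ≤ s.rk by omega]
  have h1 := PP_eq hq
  have h2 := bv_eq h0 hq (m := 1) le_rfl
  rw [av_eq h0 hq le_rfl] at h
  norm_num at h2 h
  linear_combination -h - h1 - h2

/-- The generating function of the partitions whose rank is congruent to `c` modulo `5`. -/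
noncomputable def Nc (q : ℂ) (c : ℤ) : ℂ :=
  ∑' s : Ptn, if s.rk ≡ c [ZMOD 5] then q ^ s.size else 0

lemma hasSum_RR (hq : ‖q‖ ≤ 1 / 64) (c : ℤ) :
    HasSum (fun m : ℤ => RR q (5 * m + c)) (Nc q c) := by
  have h := (summable_ite hq fun s => s.rk ≡ c [ZMOD 5]).hasSum.tsum_fiberwise Ptn.rk
  have hi : Function.Injective fun m : ℤ => 5 * m + c := fun a b h => by
    simp only at h; omega
  have e : ∀ j, (∑' s : Ptn.rk ⁻¹' {j}, if s.1.rk ≡ c [ZMOD 5] then q ^ s.1.size else 0) =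
      if j ≡ c [ZMOD 5] then RR q j else 0 := fun j => by
    rw [tsum_subtype (Ptn.rk ⁻¹' {j}) fun s => if s.rk ≡ c [ZMOD 5] then q ^ s.size else 0]
    split_ifs with hj
    · refine tsum_congr fun s => ?_
      by_cases hs : s.rk = j <;> simp [Set.indicator, hs, hj]
    · rw [← tsum_zero (α := ℂ) (β := Ptn)]
      refine tsum_congr fun s => ?_
      by_cases hs : s.rk = j <;> simp [Set.indicator, hs, hj]
  have h' := h.congr_fun fun j => (e j).symm
  refine ((hi.hasSum_iff fun j hj => if_neg fun h => hj ?_).2 h').congr_fun fun m => ?_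
  · obtain ⟨m, hm⟩ := h.symm.dvd
    exact ⟨m, by simp only; linarith⟩
  · exact (if_pos (by simp [Int.ModEq])).symm

/-- The sum of `TT q (c + 5 * t)` over `t`, as a Lambert type series. -/
noncomputable def gs (q : ℂ) (c : ℤ) : ℂ :=
  ∑' n : ℕ, UU q c (n + 1) * (1 - q ^ (5 * ((n : ℤ) + 1)))⁻¹

lemma UU_add (h0 : q ≠ 0) (c : ℤ) (n t : ℕ) :
    UU q (c + 5 * t) (n + 1) = UU q c (n + 1) * (q ^ (5 * ((n : ℤ) + 1))) ^ t := by
  rw [UU, UU, show 3 * tri (n + 1) + (1 + (c + 5 * t)) * ((n : ℤ) + 1) =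
    (3 * tri (n + 1) + (1 + c) * ((n : ℤ) + 1)) + 5 * ((n : ℤ) + 1) * t by ring,
    zpow_add₀ h0, zpow_mul q _ (t : ℤ), zpow_natCast]
  ring

lemma norm_qpow_lt (hq : ‖q‖ ≤ 1 / 64) (n : ℕ) : ‖q ^ (5 * ((n : ℤ) + 1))‖ < 1 := by
  rw [norm_zpow]
  have := pow_lt_one₀ (norm_nonneg q) (by linarith) (show 5 * (n + 1) ≠ 0 by omega)
  exact_mod_cast this

lemma hasSum_swap {f : ℕ → ℕ → ℂ} {g : ℕ → ℂ} (hf : Summable fun p : ℕ × ℕ => f p.1 p.2)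
    (h : ∀ n, HasSum (f n) (g n)) : HasSum (fun t => ∑' n, f n t) (∑' n, g n) := by
  have e : ∑' n, g n = ∑' t, ∑' n, f n t := by
    rw [Summable.tsum_comm (f := f) hf]
    exact tsum_congr fun n => (h n).tsum_eq.symm
  rw [e]
  exact (Summable.prod hf.prod_symm).hasSum

lemma hasSum_TT (h0 : q ≠ 0) (hq : ‖q‖ ≤ 1 / 64) {c : ℤ} (hc : 0 ≤ c) :
    HasSum (fun t : ℕ => TT q (5 * t + c)) (gs q c) := by
  have hp := norm_pos_iff.2 h0
  have hb : Summable fun p : ℕ × ℕ => ((1 / 4 : ℝ) ^ (p.1 + 1)) * (1 / 4) ^ p.2 := by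
    have hg := summable_geometric_of_lt_one (r := (1 / 4 : ℝ)) (by norm_num) (by norm_num)
    exact ((summable_nat_add_iff 1).2 hg).mul_of_nonneg hg (fun _ => by positivity)
      fun _ => by positivity
  have hs : Summable fun p : ℕ × ℕ => UU q (c + 5 * p.2) (p.1 + 1) := by
    refine Summable.of_norm_bounded hb fun p => (norm_UU_le h0 hq (by positivity) p.1).trans ?_
    refine mul_le_mul_of_nonneg_left ?_ (by positivity)
    rw [norm_zpow, ← zpow_natCast (1 / 4 : ℝ)]
    calc ‖q‖ ^ (c + 5 * (p.2 : ℤ)) ≤ ‖q‖ ^ (p.2 : ℤ) :=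
          zpow_le_zpow_right_of_le_one₀ hp (by linarith) (by omega)
      _ ≤ (1 / 4) ^ (p.2 : ℤ) := by
          rw [zpow_natCast, zpow_natCast]; gcongr; linarith
  have h1 : ∀ n : ℕ, HasSum (fun t : ℕ => UU q (c + 5 * t) (n + 1))
      (UU q c (n + 1) * (1 - q ^ (5 * ((n : ℤ) + 1)))⁻¹) := fun n =>
    ((hasSum_geometric_of_norm_lt_one (norm_qpow_lt hq n)).mul_left _).congr_fun
      fun t => UU_add h0 c n t
  refine (hasSum_swap (f := fun n t => UU q (c + 5 * t) (n + 1)) hs h1).congr_fun fun t => ?_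
  rw [TT, add_comm]

lemma GG_eq (h0 : q ≠ 0) (hq : ‖q‖ ≤ 1 / 64) (b : ℤ) :
    GG b q = gs q (b + 1) - gs q (5 - b) := by
  rw [GG, tsum_int_split (summable_GG h0 (by linarith) b), gs, gs]
  have e1 : ∀ n : ℕ, (-1 : ℂ) ^ ((n : ℤ) + 1) * q ^ (3 * tri ((n : ℤ) + 1) + (b + 2) * (n + 1)) *
      (1 - q ^ (5 * ((n : ℤ) + 1)))⁻¹ =
      UU q (b + 1) (n + 1) * (1 - q ^ (5 * ((n : ℤ) + 1)))⁻¹ := fun n => by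
    rw [UU]; ring_nf
  have e2 : ∀ n : ℕ, (-1 : ℂ) ^ (-((n : ℤ) + 1)) *
      q ^ (3 * tri (-((n : ℤ) + 1)) + (b + 2) * (-(n + 1))) *
      (1 - q ^ (5 * (-((n : ℤ) + 1))))⁻¹ =
      -(UU q (5 - b) (n + 1) * (1 - q ^ (5 * ((n : ℤ) + 1)))⁻¹) := fun n => by
    have h1 : 1 - q ^ (5 * ((n : ℤ) + 1)) ≠ 0 := sub_ne_zero.2 fun h => by
      have := norm_qpow_lt hq n
      rw [← h, norm_one] at this
      exact lt_irrefl _ this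
    have h2 : q ^ (5 * ((n : ℤ) + 1)) ≠ 0 := zpow_ne_zero _ h0
    have h3 : 1 - q ^ (5 * (-((n : ℤ) + 1))) =
        -((1 - q ^ (5 * ((n : ℤ) + 1))) / q ^ (5 * ((n : ℤ) + 1))) := by
      rw [show 5 * (-((n : ℤ) + 1)) = -(5 * ((n : ℤ) + 1)) by ring, zpow_neg]
      generalize q ^ (5 * ((n : ℤ) + 1)) = x at h2
      field_simp
      ring
    rw [h3, UU, neg_one_zpow_neg, tri_neg,
      show 3 * tri ((n : ℤ) + 1) + (1 + (5 - b)) * ((n : ℤ) + 1) =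
      (3 * (tri ((n : ℤ) + 1) + ((n : ℤ) + 1)) + (b + 2) * (-((n : ℤ) + 1))) +
        5 * ((n : ℤ) + 1) by ring, zpow_add₀ h0 _ (5 * ((n : ℤ) + 1)), inv_neg, inv_div]
    ring
  rw [tsum_congr e1, tsum_congr e2, tsum_neg]
  simp
  ring

/-- The ranks of the partitions counted by `Nc q c` are the `5 * t + c` and `-(5 * t + (5 - c))`,
for `t : ℕ`. -/
lemma Nc_eq (h0 : q ≠ 0) (hq : ‖q‖ ≤ 1 / 64) {c : ℕ} (h1 : 1 ≤ c) (h4 : c ≤ 4) :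
    Nc q c = PP q * (gs q (c + 1) - gs q c + gs q (6 - c) - gs q (5 - c)) := by
  have hR := hasSum_RR hq (c : ℤ)
  have k1 : HasSum (fun n : ℕ => RR q (5 * n + c)) (PP q * (gs q (c + 1) - gs q c)) := by
    refine (((hasSum_TT h0 hq (c := c + 1) (by omega)).sub
      (hasSum_TT h0 hq (c := c) (by omega))).mul_left (PP q)).congr_fun fun n => ?_
    have := RR_natCast h0 hq (m := 5 * n + c) (by omega)
    push_cast at this
    rw [this, add_assoc]
  have k2 : HasSum (fun n : ℕ => RR q (5 * (-(n + 1 : ℕ) : ℤ) + c))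
      (PP q * (gs q (6 - c) - gs q (5 - c))) := by
    refine (((hasSum_TT h0 hq (c := 6 - c) (by omega)).sub
      (hasSum_TT h0 hq (c := 5 - c) (by omega))).mul_left (PP q)).congr_fun fun n => ?_
    have := RR_neg_natCast h0 hq (m := 5 * n + (5 - c)) (by omega)
    push_cast [Nat.cast_sub (show c ≤ 5 by omega)] at this
    rw [show 5 * (-(n + 1 : ℕ) : ℤ) + c = -(5 * n + (5 - c)) by push_cast; ring, this]
    ring_nf
  have := hR.unique (HasSum.of_nat_of_neg_add_one k1 (by simpa using k2))
  rw [this]; ring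

lemma Nc_zero (h0 : q ≠ 0) (hq : ‖q‖ ≤ 1 / 64) :
    Nc q 0 = PP q * (1 + 2 * gs q 1 - 2 * gs q 5) := by
  have hR := hasSum_RR hq 0
  have k1 : HasSum (fun n : ℕ => TT q (5 * n + 6) - TT q (5 * n + 5)) (gs q 6 - gs q 5) :=
    (hasSum_TT h0 hq (by norm_num)).sub (hasSum_TT h0 hq (by norm_num))
  have k2 : gs q 1 = TT q 1 + gs q 6 := by
    rw [← (hasSum_TT h0 hq zero_le_one).tsum_eq,
      (hasSum_TT h0 hq zero_le_one).summable.tsum_eq_zero_add,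
      ← (hasSum_TT h0 hq (show (0 : ℤ) ≤ 6 by norm_num)).tsum_eq]
    have e : ∀ n : ℕ, TT q (5 * ((n + 1 : ℕ) : ℤ) + 1) = TT q (5 * n + 6) := fun n => by
      congr 1
    rw [tsum_congr e]
    norm_num
  rw [← hR.tsum_eq, tsum_int_split hR.summable]
  have e1 : ∀ n : ℕ, RR q (5 * ((n : ℤ) + 1) + 0) =
      PP q * (TT q (5 * n + 6) - TT q (5 * n + 5)) := fun n => by
    have := RR_natCast h0 hq (m := 5 * n + 5) (by omega)
    push_cast at this
    rw [show 5 * ((n : ℤ) + 1) + 0 = 5 * n + 5 by ring, this]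
    ring_nf
  have e2 : ∀ n : ℕ, RR q (5 * (-((n : ℤ) + 1)) + 0) =
      PP q * (TT q (5 * n + 6) - TT q (5 * n + 5)) := fun n => by
    have := RR_neg_natCast h0 hq (m := 5 * n + 5) (by omega)
    push_cast at this
    rw [show 5 * (-((n : ℤ) + 1)) + 0 = -(5 * n + 5 : ℤ) by ring, this]
    ring_nf
  rw [tsum_congr e1, tsum_congr e2, tsum_mul_left, k1.tsum_eq, mul_zero, add_zero,
    RR_zero h0 hq, k2]
  ring

end RankClasses

/-! ### Equality of the rank counts -/

section Final
variable {q : ℂ}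

lemma Nc_one_sub_two (h0 : q ≠ 0) (hq : ‖q‖ ≤ 1 / 64) :
    Nc q 1 - Nc q 2 = PP q * (2 * GG 1 q + GG 4 q) := by
  have h1 := Nc_eq h0 hq (c := 1) (by norm_num) (by norm_num)
  have h2 := Nc_eq h0 hq (c := 2) (by norm_num) (by norm_num)
  rw [GG_eq h0 hq, GG_eq h0 hq]
  norm_num at h1 h2 ⊢
  rw [h1, h2]; ring

lemma Nc_zero_sub_two (h0 : q ≠ 0) (hq : ‖q‖ ≤ 1 / 64) :
    Nc q 0 - Nc q 2 = PP q * (1 + GG 1 q - 2 * GG 4 q) := by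
  have h1 := Nc_zero h0 hq
  have h2 := Nc_eq h0 hq (c := 2) (by norm_num) (by norm_num)
  rw [GG_eq h0 hq, GG_eq h0 hq]
  norm_num at h1 h2 ⊢
  rw [h1, h2]; ring

lemma Nc_four (h0 : q ≠ 0) (hq : ‖q‖ ≤ 1 / 64) : Nc q 4 = Nc q 1 := by
  have h1 := Nc_eq h0 hq (c := 1) (by norm_num) (by norm_num)
  have h2 := Nc_eq h0 hq (c := 4) (by norm_num) (by norm_num)
  norm_num at h1 h2
  rw [h1, h2]; ring

lemma Nc_three (h0 : q ≠ 0) (hq : ‖q‖ ≤ 1 / 64) : Nc q 3 = Nc q 2 := by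
  have h1 := Nc_eq h0 hq (c := 2) (by norm_num) (by norm_num)
  have h2 := Nc_eq h0 hq (c := 3) (by norm_num) (by norm_num)
  norm_num at h1 h2
  rw [h1, h2]; ring

lemma hasSum_rankCountMod (hq : ‖q‖ ≤ 1 / 64) (c : ℤ) :
    HasSum (fun n => (rankCountMod c 5 n : ℂ) * q ^ n) (Nc q c) := by
  have h := (Ptn.equivSigma.hasSum_iff
    (f := fun s : Ptn => if s.rk ≡ c [ZMOD 5] then q ^ s.size else 0)).2
    (summable_ite hq _).hasSum
  refine (h.sigma fun n => hasSum_fintype _).congr_fun fun n => ?_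
  have e : ∀ x : n.Partition, ((fun s : Ptn => if s.rk ≡ c [ZMOD 5] then q ^ s.size else 0) ∘
      Ptn.equivSigma) ⟨n, x⟩ = if x.rank ≡ c [ZMOD (5 : ℕ)] then q ^ n else 0 := fun x => by
    simp only [Function.comp, Ptn.size_equivSigma]
    rfl
  rw [Finset.sum_congr rfl fun x _ => e x, ← Finset.sum_filter, Finset.sum_const, nsmul_eq_mul,
    rankCountMod, Fintype.card_subtype]

/-- Two classes have equally many members among the partitions of `5 * k + 4` as soon as the
difference of their generating functions has a `5`-dissection lacking the class `4`. -/
lemma rankCountMod_eq {c d : ℤ} (f₀ f₁ f₂ f₃ : ℂ → ℂ)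
    (h : ∀ q : ℂ, q ≠ 0 → ‖q‖ ≤ 1 / 64 → Nc q c - Nc q d =
      f₀ (q ^ 5) + q * f₁ (q ^ 5) + q ^ 2 * f₂ (q ^ 5) + q ^ 3 * f₃ (q ^ 5)) (k : ℕ) :
    rankCountMod c 5 (5 * k + 4) = rankCountMod d 5 (5 * k + 4) := by
  have := coeff_eq_zero_of_dissection
    (a := fun n => (rankCountMod c 5 n : ℂ) - rankCountMod d 5 n) (ε := 1 / 64) (by norm_num)
    f₀ f₁ f₂ f₃ (fun q h0 hq => ?_) k
  · exact_mod_cast sub_eq_zero.1 this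
  · rw [← h q h0 hq.le]
    exact ((hasSum_rankCountMod hq.le c).sub (hasSum_rankCountMod hq.le d)).congr_fun
      fun n => sub_mul _ _ _

lemma rankCountMod_one (k : ℕ) :
    rankCountMod 1 5 (5 * k + 4) = rankCountMod 2 5 (5 * k + 4) := by
  refine rankCountMod_eq (fun y => y * LL (y ^ 5) y 1 / Th ((y ^ 5) ^ 3) (y ^ 5)) (fun _ => 0)
    (fun y => kf (y ^ 5) 1 / (Th ((y ^ 5) ^ 3) (y ^ 5) * Th (y ^ 5) (y ^ 2)))
    (fun y => -2 * y * LL (y ^ 5) (y ^ 2) 1 / Th ((y ^ 5) ^ 3) (y ^ 5) -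
      kf (y ^ 5) 1 * Th (y ^ 5) y / (Th ((y ^ 5) ^ 3) (y ^ 5) * Th (y ^ 5) (y ^ 2) ^ 2))
    (fun q h0 hq => ?_) k
  obtain ⟨n1, n2, n3, n4⟩ := nonvanishing h0 hq rfl rfl
  rw [Nc_one_sub_two h0 hq, two_GG_one_add h0 (by linarith) rfl rfl n1 n2 n3 n4, ← mul_assoc,
    PP_mul_EE h0 hq, one_mul, mul_zero, add_zero]

lemma rankCountMod_zero (k : ℕ) :
    rankCountMod 0 5 (5 * k + 4) = rankCountMod 2 5 (5 * k + 4) := by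
  refine rankCountMod_eq
    (fun y => -2 * y * LL (y ^ 5) y 1 / Th ((y ^ 5) ^ 3) (y ^ 5) + kf (y ^ 5) 1 *
      Th (y ^ 5) (y ^ 2) / (Th ((y ^ 5) ^ 3) (y ^ 5) * Th (y ^ 5) y ^ 2))
    (fun y => kf (y ^ 5) 1 / (Th ((y ^ 5) ^ 3) (y ^ 5) * Th (y ^ 5) y))
    (fun _ => 0) (fun y => -y * LL (y ^ 5) (y ^ 2) 1 / Th ((y ^ 5) ^ 3) (y ^ 5))
    (fun q h0 hq => ?_) k
  obtain ⟨n1, n2, n3, n4⟩ := nonvanishing h0 hq rfl rfl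
  rw [Nc_zero_sub_two h0 hq, GG_one_sub h0 (by linarith) rfl rfl n1 n2 n3 n4, ← mul_assoc,
    PP_mul_EE h0 hq, one_mul, mul_zero, add_zero]

lemma rankCountMod_four (k : ℕ) :
    rankCountMod 4 5 (5 * k + 4) = rankCountMod 1 5 (5 * k + 4) :=
  rankCountMod_eq 0 0 0 0 (fun q h0 hq => by simp [Nc_four h0 hq]) k

lemma rankCountMod_three (k : ℕ) :
    rankCountMod 3 5 (5 * k + 4) = rankCountMod 2 5 (5 * k + 4) :=
  rankCountMod_eq 0 0 0 0 (fun q h0 hq => by simp [Nc_three h0 hq]) k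

lemma rankCountMod_eq_sum (c : ℤ) (n : ℕ) :
    rankCountMod c 5 n = ∑ π : n.Partition, if π.rank % 5 = c % 5 then 1 else 0 := by
  rw [rankCountMod, Fintype.card_subtype, Finset.card_filter]
  rfl

lemma sum_rankCountMod (n : ℕ) : rankCountMod 0 5 n + rankCountMod 1 5 n + rankCountMod 2 5 n +
    rankCountMod 3 5 n + rankCountMod 4 5 n = partitionCount n := by
  rw [partitionCount, ← Finset.card_univ, Finset.card_eq_sum_ones]
  simp only [rankCountMod_eq_sum, ← Finset.sum_add_distrib]
  refine Finset.sum_congr rfl fun π _ => ?_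
  split_ifs <;> omega

end Final

theorem dyson_rank_mod_5 (k : ℕ) (m : ℤ) (hm0 : 0 ≤ m) (hm4 : m ≤ 4) :
    rankCountMod m 5 (5 * k + 4) = partitionCount (5 * k + 4) / 5 := by
  have hs := sum_rankCountMod (5 * k + 4)
  have h0 := rankCountMod_zero k
  have h1 := rankCountMod_one k
  have h3 := rankCountMod_three k
  have h4 := rankCountMod_four k
  interval_cases m <;> omega
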